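/- arXiv:1510.07433 — 2 statements merged into one kernel-verified Lean document; each statement's English description precedes it below -/
import Mathlib

section
/- (q-Briot–Bouquet theorem, analytic form.) Let m, n ≥ 1, let q = (q₁,…,q_m) ∈ (ℂ∖{0})^m, let Y ∈ ℂⁿ, and let H : ℂ^m × ℂⁿ → ℂⁿ be analytic at (0, Y) with H(0, Y) = Y. Let D be the n×n Jacobian matrix (∂H_j/∂y_k)(0, Y). If no eigenvalue of D lies in the closure in ℂ of the set Q = {q₁^{α₁}⋯q_m^{α_m} : α ∈ ℕ^m, α ≠ 0}, then there exist an open neighborhood W of 0 in ℂ^m and an analytic map y : W → ℂⁿ with y(0) = Y such that y(q∘t) = H(t, y(t)) for every t ∈ W with q∘t ∈ W, where q∘t := (q₁t₁,…,q_m t_m). Moreover y is unique as a germ at 0: any two analytic maps defined on open neighborhoods of 0, taking the value Y at 0 and satisfying the same equation on their domains, agree on some neighborhood of 0. -/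
/-!
Write the equation as `L y = h(t, y)` with `(L y)(t) = y(q ∘ t) - D y(t)`, after translating `Y` to
`0`; then `h` has no linear part in `y`. On the monomial `t ^ α` the operator `L` acts as the matrix
`q ^ α - D`. The spectral hypothesis says that these matrices are invertible for `α ≠ 0`, and taking
the closure of the set of the `q ^ α` makes their inverses bounded uniformly in `α`, because the
resolvent of `D` is bounded on a closed set avoiding the spectrum (`exists_resolvent_bound`). No small
divisors appear.

Existence. The function space is the Wiener algebra of power series with absolutely summable
coefficients, in which every bounded family of coefficient multipliers is a bounded operator. So `L`
has a bounded right inverse `S` modulo constants (`eval_multiplier`). The Wiener algebra is a Banach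
algebra on which analytic functions act (`exists_functional_calculus`), which makes
`(s, b) ↦ b - S(h(s t, b))` a strictly differentiable map whose derivative in `b` is the identity at
the origin; the inverse function theorem solves the equation rescaled by a small `s > 0`
(`exists_solution_of_flat`). Elements of the Wiener algebra define analytic functions on the open unit
polydisc (`hasFPowerSeriesOnBall_eval`), and undoing the rescaling gives the solution.

Uniqueness. The lowest-degree homogeneous part `P` of the difference of two solutions satisfies
`P(q ∘ t) = D P(t)` (`germ_unique`), so its coefficients lie in the kernels of the invertible matrices
`q ^ α - D` (`multilinear_diag_eq_zero`).
-/

open Filter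

noncomputable section

/-! ### Polynomials with the `ℓ¹` norm -/

/-- Complex polynomials in `m` variables. This is a type synonym of `MvPolynomial (Fin m) ℂ`, made so
that it can carry the norm `∑ |coefficients|`. -/
def L1Poly (m : ℕ) : Type := MvPolynomial (Fin m) ℂ

namespace L1Poly
variable {m : ℕ}

instance : CommRing (L1Poly m) := inferInstanceAs (CommRing (MvPolynomial (Fin m) ℂ))
instance : Algebra ℂ (L1Poly m) := inferInstanceAs (Algebra ℂ (MvPolynomial (Fin m) ℂ))

/-- The sum of the absolute values of the coefficients of a polynomial. -/
def l1 (p : MvPolynomial (Fin m) ℂ) : ℝ := ∑ α ∈ p.support, ‖p.coeff α‖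

lemma l1_eq_sum {p : MvPolynomial (Fin m) ℂ} {s : Finset (Fin m →₀ ℕ)} (h : p.support ⊆ s) :
    l1 p = ∑ α ∈ s, ‖p.coeff α‖ :=
  Finset.sum_subset h fun α _ hα => by simpa using hα

lemma l1_nonneg (p : MvPolynomial (Fin m) ℂ) : 0 ≤ l1 p := Finset.sum_nonneg fun _ _ => norm_nonneg _

lemma l1_add (p q : MvPolynomial (Fin m) ℂ) : l1 (p + q) ≤ l1 p + l1 q := by
  classical
  rw [l1_eq_sum (MvPolynomial.support_add (p := p) (q := q)),
    l1_eq_sum (Finset.subset_union_left (s₁ := p.support) (s₂ := q.support)),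
    l1_eq_sum (Finset.subset_union_right (s₁ := p.support) (s₂ := q.support)),
    ← Finset.sum_add_distrib]
  exact Finset.sum_le_sum fun α _ => by simpa using norm_add_le _ _

lemma l1_monomial (α : Fin m →₀ ℕ) (c : ℂ) : l1 (MvPolynomial.monomial α c) = ‖c‖ := by
  classical
  rw [l1_eq_sum (MvPolynomial.support_monomial_subset)]
  simp

lemma l1_zero : l1 (0 : MvPolynomial (Fin m) ℂ) = 0 := by simp [l1]

lemma l1_sum {ι : Type*} (s : Finset ι) (f : ι → MvPolynomial (Fin m) ℂ) :
    l1 (∑ i ∈ s, f i) ≤ ∑ i ∈ s, l1 (f i) := Finset.le_sum_of_subadditive _ l1_zero.le l1_add _ _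

lemma l1_mul (p q : MvPolynomial (Fin m) ℂ) : l1 (p * q) ≤ l1 p * l1 q := by
  rw [MvPolynomial.mul_def, MvPolynomial.sum_def]
  simp_rw [MvPolynomial.sum_def]
  refine (l1_sum _ _).trans ?_
  rw [l1, l1, Finset.sum_mul_sum]
  refine Finset.sum_le_sum fun α _ => (l1_sum _ _).trans (le_of_eq ?_)
  exact Finset.sum_congr rfl fun β _ => by rw [l1_monomial, norm_mul]

lemma l1_smul (c : ℂ) (p : MvPolynomial (Fin m) ℂ) : l1 (c • p) ≤ ‖c‖ * l1 p := by
  rw [l1_eq_sum (MvPolynomial.support_smul (a := c) (f := p)), l1, Finset.mul_sum]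
  exact Finset.sum_le_sum fun α _ => by simp

lemma l1_neg (p : MvPolynomial (Fin m) ℂ) : l1 (-p) = l1 p := by
  simp [l1]

lemma l1_eq_zero {p : MvPolynomial (Fin m) ℂ} (h : l1 p = 0) : p = 0 := by
  ext α
  by_cases hα : α ∈ p.support
  · simpa using (Finset.sum_eq_zero_iff_of_nonneg (fun _ _ => norm_nonneg _)).1 h α hα
  · simpa using hα

instance : Norm (L1Poly m) := ⟨fun p => l1 p⟩

lemma norm_def (p : L1Poly m) : ‖p‖ = l1 p := rfl

instance : NormedAddCommGroup (L1Poly m) :=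
  AddGroupNorm.toNormedAddCommGroup
    { toFun := fun p : L1Poly m => l1 p
      map_zero' := l1_zero
      add_le' := l1_add
      neg' := l1_neg
      eq_zero_of_map_eq_zero' := fun _ h => l1_eq_zero h }

instance : NormedCommRing (L1Poly m) :=
  { (inferInstance : NormedAddCommGroup (L1Poly m)),
    (inferInstance : CommRing (L1Poly m)) with
    norm_mul_le := l1_mul }

instance : NormedAlgebra ℂ (L1Poly m) :=
  { (inferInstance : Algebra ℂ (L1Poly m)) with norm_smul_le := l1_smul }

/-- The identity map, seen as an algebra isomorphism onto the normed type synonym. -/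
def ofPoly : MvPolynomial (Fin m) ℂ ≃ₐ[ℂ] L1Poly m := AlgEquiv.refl

lemma norm_ofPoly (p : MvPolynomial (Fin m) ℂ) : ‖(ofPoly p : L1Poly m)‖ = l1 p := rfl

instance : NormOneClass (L1Poly m) := ⟨by
  rw [← map_one (ofPoly (m := m)), norm_ofPoly, ← MvPolynomial.C_1, MvPolynomial.C_apply, l1_monomial,
    norm_one]⟩

/-- The monomials, as a basis of `L1Poly m`. -/
def basis : Module.Basis (Fin m →₀ ℕ) ℂ (L1Poly m) :=
  (MvPolynomial.basisMonomials (Fin m) ℂ).map ofPoly.toLinearEquiv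

lemma basis_apply (α : Fin m →₀ ℕ) : basis α = ofPoly (MvPolynomial.monomial α 1) := by
  simp [basis]

/-- In the `ℓ¹` norm, a linear map is bounded by the largest norm it takes on monomials. -/
lemma norm_constr_le {V : Type*} [NormedAddCommGroup V] [NormedSpace ℂ V]
    {v : (Fin m →₀ ℕ) → V} {C : ℝ} (hv : ∀ α, ‖v α‖ ≤ C) (p : L1Poly m) :
    ‖basis.constr ℂ v p‖ ≤ C * ‖p‖ := by
  obtain ⟨p, rfl⟩ := ofPoly.surjective p
  have : basis.constr ℂ v (ofPoly p) = ∑ α ∈ p.support, p.coeff α • v α := by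
    conv_lhs => rw [p.as_sum, map_sum, map_sum]
    refine Finset.sum_congr rfl fun α _ => ?_
    have : MvPolynomial.monomial α (p.coeff α) = p.coeff α • MvPolynomial.monomial α (1 : ℂ) := by
      simp [MvPolynomial.smul_monomial]
    rw [this, map_smul, ← basis_apply, map_smul, Module.Basis.constr_basis]
  rw [this, norm_ofPoly, l1, Finset.mul_sum]
  refine norm_sum_le_of_le _ fun α _ => ?_
  rw [norm_smul, mul_comm]
  exact mul_le_mul_of_nonneg_right (hv α) (norm_nonneg _)

end L1Poly

/-! ### The Wiener algebra -/

/-- The Wiener algebra: power series in `m` variables with absolutely summable coefficients. It is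
encoded as the completion of the polynomials in the `ℓ¹` norm, so its elements are not literally
coefficient families; they are handled through `lift`, `ext_mono` and the evaluations `eval`. -/
abbrev Wiener (m : ℕ) : Type := UniformSpace.Completion (L1Poly m)

namespace Wiener
variable {m : ℕ}

instance : NormOneClass (Wiener m) := ⟨by
  rw [← UniformSpace.Completion.coe_one, UniformSpace.Completion.norm_coe, norm_one]⟩

/-- The monomial `t ^ α`. -/
def mono (α : Fin m →₀ ℕ) : Wiener m := (L1Poly.ofPoly (MvPolynomial.monomial α 1) : L1Poly m)

lemma mono_zero : mono (0 : Fin m →₀ ℕ) = 1 := by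
  rw [mono, ← MvPolynomial.C_apply, MvPolynomial.C_1, map_one, UniformSpace.Completion.coe_one]

lemma mono_add (α β : Fin m →₀ ℕ) : mono (α + β) = mono α * mono β := by
  rw [mono, mono, mono, ← UniformSpace.Completion.coe_mul, ← map_mul, MvPolynomial.monomial_mul,
    one_mul]

lemma norm_mono (α : Fin m →₀ ℕ) : ‖mono α‖ = 1 := by
  rw [mono, UniformSpace.Completion.norm_coe, L1Poly.norm_ofPoly, L1Poly.l1_monomial, norm_one]

variable {V : Type*} [NormedAddCommGroup V] [NormedSpace ℂ V]

/-- The monomials span a dense subspace. -/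
lemma ext_mono {f g : Wiener m →L[ℂ] V} (h : ∀ α, f (mono α) = g (mono α)) : f = g := by
  ext x
  induction x using UniformSpace.Completion.induction_on with
  | hp => exact isClosed_eq f.continuous g.continuous
  | ih p =>
    have : f.toLinearMap ∘ₗ UniformSpace.Completion.toComplL.toLinearMap =
        g.toLinearMap ∘ₗ UniformSpace.Completion.toComplL.toLinearMap :=
      L1Poly.basis.ext fun α => by
        simpa [L1Poly.basis_apply] using! h α
    exact LinearMap.congr_fun this p

/-- The continuous linear map sending the monomial `t ^ α` to `v α`. It has this meaning only for a
bounded family `v`; see `lift_mono`. -/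
def lift [CompleteSpace V] (v : (Fin m →₀ ℕ) → V) : Wiener m →L[ℂ] V :=
  (L1Poly.basis.constr ℂ v).extendOfNorm
    (UniformSpace.Completion.toComplL : L1Poly m →L[ℂ] Wiener m).toLinearMap

variable [CompleteSpace V] {v : (Fin m →₀ ℕ) → V} {C : ℝ}

lemma norm_lift_le (hv : ∀ α, ‖v α‖ ≤ C) : ‖lift v‖ ≤ C :=
  LinearMap.opNorm_extendOfNorm_le UniformSpace.Completion.denseRange_coe
    ((norm_nonneg _).trans (hv 0)) fun p => by
      simpa using L1Poly.norm_constr_le hv p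

lemma lift_mono (hv : ∀ α, ‖v α‖ ≤ C) (α : Fin m →₀ ℕ) : lift v (mono α) = v α := by
  have := LinearMap.extendOfNorm_eq (f := L1Poly.basis.constr ℂ v)
    (e := (UniformSpace.Completion.toComplL : L1Poly m →L[ℂ] Wiener m).toLinearMap)
    UniformSpace.Completion.denseRange_coe
    ⟨C, fun p => by simpa using L1Poly.norm_constr_le hv p⟩ (L1Poly.basis α)
  rw [Module.Basis.constr_basis] at this
  rw [← this, L1Poly.basis_apply]
  rfl

/-- The value of a series at the point `t`, meaningful on the closed unit polydisc `‖t‖ ≤ 1` (sup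
norm), where it is a character of the algebra. -/
def eval (t : Fin m → ℂ) : Wiener m →L[ℂ] ℂ := lift fun α => ∏ i, t i ^ α i

lemma norm_pow_le {t : Fin m → ℂ} (ht : ‖t‖ ≤ 1) (α : Fin m →₀ ℕ) : ‖∏ i, t i ^ α i‖ ≤ 1 := by
  rw [norm_prod]
  refine Finset.prod_le_one (fun _ _ => norm_nonneg _) fun i _ => ?_
  rw [norm_pow]
  exact pow_le_one₀ (norm_nonneg _) ((norm_le_pi_norm t i).trans ht)

lemma eval_mono {t : Fin m → ℂ} (ht : ‖t‖ ≤ 1) (α : Fin m →₀ ℕ) :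
    eval t (mono α) = ∏ i, t i ^ α i := lift_mono (norm_pow_le ht) α

lemma norm_eval_le {t : Fin m → ℂ} (ht : ‖t‖ ≤ 1) (a : Wiener m) : ‖eval t a‖ ≤ ‖a‖ := by
  simpa using (eval t).le_of_opNorm_le (norm_lift_le (norm_pow_le ht)) a

lemma eval_one {t : Fin m → ℂ} (ht : ‖t‖ ≤ 1) : eval t (1 : Wiener m) = 1 := by
  rw [← mono_zero, eval_mono ht]; simp

lemma eval_mul {t : Fin m → ℂ} (ht : ‖t‖ ≤ 1) (a b : Wiener m) :
    eval t (a * b) = eval t a * eval t b := by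
  have h1 (β : Fin m →₀ ℕ) : ∀ a : Wiener m, eval t (a * mono β) = eval t a * eval t (mono β) := by
    have : (eval t).comp ((ContinuousLinearMap.mul ℂ (Wiener m)).flip (mono β)) =
        ((ContinuousLinearMap.mul ℂ ℂ).flip (eval t (mono β))).comp (eval t) := by
      refine ext_mono fun α => ?_
      simp [← mono_add, eval_mono ht, pow_add, Finset.prod_mul_distrib]
    exact fun a => DFunLike.congr_fun this a
  have : (eval t).comp (ContinuousLinearMap.mul ℂ (Wiener m) a) =
      (ContinuousLinearMap.mul ℂ ℂ (eval t a)).comp (eval t) :=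
    ext_mono fun β => by simpa using h1 β a
  exact DFunLike.congr_fun this b

/-- Evaluation at a point of the closed unit polydisc, as an algebra homomorphism. -/
def evalHom {t : Fin m → ℂ} (ht : ‖t‖ ≤ 1) : Wiener m →ₐ[ℂ] ℂ :=
  AlgHom.ofLinearMap (eval t).toLinearMap (eval_one ht) (eval_mul ht)

/-- The operator multiplying the coefficient of index `α` by `r α`, for a bounded family `r`. -/
def multiplier (r : (Fin m →₀ ℕ) → ℂ) : Wiener m →L[ℂ] Wiener m := lift fun α => r α • mono α

lemma multiplier_mono {r : (Fin m →₀ ℕ) → ℂ} (hr : ∀ α, ‖r α‖ ≤ C) (α : Fin m →₀ ℕ) :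
    multiplier r (mono α) = r α • mono α :=
  lift_mono (C := C) (fun α => by rw [norm_smul, norm_mono, mul_one]; exact hr α) α

/-- The coordinate function `t ↦ t i`. -/
def coord (i : Fin m) : Wiener m := mono (Finsupp.single i 1)

lemma eval_coord {t : Fin m → ℂ} (ht : ‖t‖ ≤ 1) (i : Fin m) : eval t (coord i) = t i := by
  classical
  rw [coord, eval_mono ht, Finset.prod_eq_single i] <;> simp +contextual [eq_comm]

/-- A `k`-linear form whose restriction to the diagonal is `t ^ α` if `|α| = k`, and `0` otherwise
(`homogMono_apply`). It is a product of coordinates along a word of length `k` in which each letter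
`i` occurs `α i` times; there is no such word unless `|α| = k`. -/
def homogMono (k : ℕ) (α : Fin m →₀ ℕ) :
    ContinuousMultilinearMap ℂ (fun _ : Fin k => Fin m → ℂ) ℂ :=
  open Classical in
  if h : ∃ w : Fin k → Fin m, ∀ t : Fin m → ℂ, ∏ j, t (w j) = ∏ i, t i ^ α i then
    (ContinuousMultilinearMap.mkPiAlgebra ℂ (Fin k) ℂ).compContinuousLinearMap
      fun j => ContinuousLinearMap.proj (h.choose j)
  else 0

lemma norm_homogMono_le (k : ℕ) (α : Fin m →₀ ℕ) : ‖homogMono k α‖ ≤ 1 := by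
  unfold homogMono
  split_ifs with h
  · refine ContinuousMultilinearMap.opNorm_le_bound zero_le_one fun x => ?_
    simp only [ContinuousMultilinearMap.compContinuousLinearMap_apply,
      ContinuousMultilinearMap.mkPiAlgebra_apply, norm_prod, one_mul]
    exact Finset.prod_le_prod (fun _ _ => norm_nonneg _) fun j _ => norm_le_pi_norm (x j) _
  · simp

/-- Each monomial `t ^ α` is the product of the coordinates along some word of length `|α|`. -/
lemma exists_word (α : Fin m →₀ ℕ) : ∃ w : Fin (∑ i, α i) → Fin m, ∀ t : Fin m → ℂ,
    ∏ j, t (w j) = ∏ i, t i ^ α i := by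
  refine ⟨fun j => (finSigmaFinEquiv.symm j).1, fun t => ?_⟩
  rw [← finSigmaFinEquiv.prod_comp]
  simp [Fintype.prod_sigma]

lemma homogMono_apply (k : ℕ) (α : Fin m →₀ ℕ) (t : Fin m → ℂ) :
    homogMono k α (fun _ => t) = if k = ∑ i, α i then ∏ i, t i ^ α i else 0 := by
  unfold homogMono
  split_ifs with h h' h'
  · simpa using h.choose_spec t
  · exfalso
    apply h'
    -- at the point (2, …, 2) the identity reads `2 ^ k = 2 ^ |α|`
    have := h.choose_spec fun _ => 2
    rw [Finset.prod_const, Finset.prod_pow_eq_pow_sum, Finset.card_fin] at this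
    exact Nat.pow_right_injective le_rfl (by exact_mod_cast this)
  · subst h'
    exact absurd (exists_word α) h
  · rfl

/-- An element of the Wiener algebra, as a function of the evaluation point, is analytic on the open
unit polydisc. -/
lemma hasFPowerSeriesOnBall_eval (a : Wiener m) :
    HasFPowerSeriesOnBall (fun t => eval t a) (fun k => lift (homogMono k) a) 0 1 := by
  have hT (k : ℕ) (a : Wiener m) : ‖lift (m := m) (homogMono k) a‖ ≤ ‖a‖ := by
    simpa using (lift (homogMono k)).le_of_opNorm_le (norm_lift_le (norm_homogMono_le k)) a
  refine ⟨?_, one_pos, fun {t} ht => ?_⟩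
  · refine FormalMultilinearSeries.le_radius_of_bound _ ‖a‖ fun k => ?_
    simpa using hT k a
  · have ht : ‖t‖ < 1 := by
      rw [← toReal_enorm, ← ENNReal.toReal_one]
      exact (ENNReal.toReal_lt_toReal (enorm_ne_top) ENNReal.one_ne_top).2 (by simpa using ht)
    rw [zero_add]
    have hb (k : ℕ) (a : Wiener m) : ‖lift (m := m) (homogMono k) a fun _ => t‖ ≤ ‖a‖ * ‖t‖ ^ k := by
      refine ((lift (homogMono k) a).le_opNorm _).trans ?_
      rw [Finset.prod_const, Finset.card_fin]
      gcongr
      exact hT k a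
    have hg (a : Wiener m) : HasSum (fun k => ‖a‖ * ‖t‖ ^ k) (‖a‖ * (1 - ‖t‖)⁻¹) :=
      (hasSum_geometric_of_lt_one (norm_nonneg _) ht).mul_left _
    have hs (a : Wiener m) : Summable fun k => lift (m := m) (homogMono k) a fun _ => t :=
      .of_norm_bounded (hg a).summable fun k => hb k a
    -- both sides of the expansion are continuous linear in `a`, so it suffices to check monomials
    have : eval t = LinearMap.mkContinuous
      { toFun := fun a => ∑' k, lift (m := m) (homogMono k) a fun _ => t
        map_add' := fun a b => by
          simp [(hs a).tsum_add (hs b)]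
        map_smul' := fun c a => by
          simp [tsum_mul_left] } (1 - ‖t‖)⁻¹ (fun a => by
          rw [mul_comm]
          exact tsum_of_norm_bounded (hg a) fun k => hb k a) := by
      refine ext_mono fun α => ?_
      rw [eval_mono ht.le]
      simp [lift_mono (norm_homogMono_le _), homogMono_apply]
    rw [this]
    exact (hs a).hasSum

end Wiener

/-! ### Analytic functions acting on the Wiener algebra -/

namespace Wiener
variable {m : ℕ} {ι : Type*} [Fintype ι] [DecidableEq ι]

/-- The formal power series over the Wiener algebra with the same coefficients as `p`: a form
`∑ c_w x_{w 1} ⋯ x_{w k}` over `ℂ` becomes the same expression over `Wiener m`. -/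
def extendScalars (m : ℕ) (p : FormalMultilinearSeries ℂ (ι → ℂ) ℂ) :
    FormalMultilinearSeries ℂ (ι → Wiener m) (Wiener m) := fun k =>
  ∑ w : Fin k → ι, p k (fun j => Pi.single (w j) 1) •
    (ContinuousMultilinearMap.mkPiAlgebra ℂ (Fin k) (Wiener m)).compContinuousLinearMap
      fun j => ContinuousLinearMap.proj (w j)

lemma extendScalars_apply (p : FormalMultilinearSeries ℂ (ι → ℂ) ℂ) (k : ℕ)
    (a : Fin k → ι → Wiener m) :
    extendScalars m p k a =
      ∑ w : Fin k → ι, p k (fun j => Pi.single (w j) 1) • ∏ j, a j (w j) := by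
  simp [extendScalars]

lemma map_multilinear_eq_sum {V : Type*} [AddCommGroup V] [Module ℂ V] [TopologicalSpace V] {k : ℕ}
    (P : ContinuousMultilinearMap ℂ (fun _ : Fin k => ι → ℂ) V) (x : Fin k → ι → ℂ) :
    P x = ∑ w : Fin k → ι, (∏ j, x j (w j)) • P (fun j => Pi.single (w j) 1) := by
  have hx : x = fun j => ∑ i, x j i • (Pi.single i 1 : ι → ℂ) := by
    ext j i
    simp [Finset.sum_apply, Pi.single_apply]
  conv_lhs => rw [hx, P.map_sum]
  exact Finset.sum_congr rfl fun w _ => P.map_smul_univ _ _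

lemma norm_extendScalars_le (p : FormalMultilinearSeries ℂ (ι → ℂ) ℂ) (k : ℕ) :
    ‖extendScalars m p k‖ ≤ ‖p k‖ * (Fintype.card ι : ℝ) ^ k := by
  refine ContinuousMultilinearMap.opNorm_le_bound (by positivity) fun a => ?_
  rw [extendScalars_apply]
  have : ∀ w ∈ (Finset.univ : Finset (Fin k → ι)),
      ‖p k (fun j => Pi.single (w j) 1) • ∏ j, a j (w j)‖ ≤ ‖p k‖ * ∏ j, ‖a j‖ := fun w _ => by
    rw [norm_smul]
    gcongr
    · refine ((p k).le_opNorm _).trans (le_of_eq ?_)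
      rw [Finset.prod_eq_one fun j _ => by simp [Pi.norm_single], mul_one]
    · exact (Finset.norm_prod_le _ _).trans
        (Finset.prod_le_prod (fun _ _ => norm_nonneg _) fun j _ => norm_le_pi_norm (a j) _)
  refine (norm_sum_le_of_le _ this).trans (le_of_eq ?_)
  simp
  ring

lemma extendScalars_radius_pos {p : FormalMultilinearSeries ℂ (ι → ℂ) ℂ} (hp : 0 < p.radius) :
    0 < (extendScalars m p).radius := by
  obtain ⟨r, hr0, hr⟩ := ENNReal.lt_iff_exists_nnreal_btwn.1 hp
  obtain ⟨C, hC, h⟩ := p.norm_mul_pow_le_of_lt_radius hr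
  have hr0 : 0 < r := by simpa using hr0
  refine lt_of_lt_of_le (b := ((r / (Fintype.card ι + 1) : NNReal) : ENNReal)) ?_
    (FormalMultilinearSeries.le_radius_of_bound _ C fun k => ?_)
  · have : 0 < r / (Fintype.card ι + 1 : NNReal) := by positivity
    exact_mod_cast this
  · refine le_trans ?_ (h k)
    calc _ ≤ ‖p k‖ * (Fintype.card ι : ℝ) ^ k * ((r : ℝ) / (Fintype.card ι + 1)) ^ k := by
          push_cast
          gcongr
          exact norm_extendScalars_le p k
      _ = ‖p k‖ * ((r : ℝ) * ((Fintype.card ι : ℝ) / (Fintype.card ι + 1))) ^ k := by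
          rw [mul_assoc, ← mul_pow]; congr 2; ring
      _ ≤ _ := by
          gcongr
          refine mul_le_of_le_one_right r.2 ?_
          rw [div_le_one (by positivity)]
          linarith

lemma eval_extendScalars {t : Fin m → ℂ} (ht : ‖t‖ ≤ 1) (p : FormalMultilinearSeries ℂ (ι → ℂ) ℂ)
    (k : ℕ) (a : ι → Wiener m) :
    eval t (extendScalars m p k fun _ => a) = p k fun _ i => eval t (a i) := by
  rw [extendScalars_apply, map_multilinear_eq_sum, map_sum]
  refine Finset.sum_congr rfl fun w _ => ?_
  rw [map_smul, smul_eq_mul, smul_eq_mul, mul_comm]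
  congr 1
  exact map_prod (evalHom ht) _ _

/-- Composition with an analytic function: if `f` is analytic at `0`, substituting elements of the
Wiener algebra of small norm into the power series of `f` gives a map `g` with `g(a)(t) = f(a(t))`. It
is strictly differentiable at `0`, with the same partial derivatives as `f`. -/
theorem exists_functional_calculus (m : ℕ) {f : (ι → ℂ) → ℂ} (hf : AnalyticAt ℂ f 0) (hf0 : f 0 = 0) :
    ∃ g : (ι → Wiener m) → Wiener m, g 0 = 0 ∧
      (∃ g' : (ι → Wiener m) →L[ℂ] Wiener m, HasStrictFDerivAt g g' 0 ∧
        ∀ a, g' a = ∑ i, fderiv ℂ f 0 (Pi.single i 1) • a i) ∧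
      ∀ᶠ a in nhds 0, ∀ t : Fin m → ℂ, ‖t‖ ≤ 1 → eval t (g a) = f fun i => eval t (a i) := by
  obtain ⟨p, r, hp⟩ := hf
  have hP := (extendScalars m p).hasFPowerSeriesOnBall
    (extendScalars_radius_pos (hp.r_pos.trans_le hp.r_le))
  refine ⟨(extendScalars m p).sum, ?_, ⟨_, hP.hasFPowerSeriesAt.hasStrictFDerivAt, fun a => ?_⟩, ?_⟩
  · have h0 := hP.hasFPowerSeriesAt.coeff_zero (fun i => 0)
    rw [← h0, extendScalars_apply]
    have h1 := hp.hasFPowerSeriesAt.coeff_zero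
    simp [h1, hf0]
  · rw [hp.hasFPowerSeriesAt.hasFDerivAt.fderiv]
    simp only [continuousMultilinearCurryFin1_apply, extendScalars_apply]
    rw [← (Equiv.funUnique (Fin 1) ι).symm.sum_comp]
    refine Finset.sum_congr rfl fun i _ => ?_
    simp
    congr 2
    funext j
    rw [Subsingleton.elim j 0]
    rfl
  · -- evaluation is a contraction, so `a` small puts all the points `a(t)` in the ball of convergence
    filter_upwards [hP.eventually_hasSum, Metric.eball_mem_nhds 0 hp.r_pos] with a ha har t ht
    rw [zero_add] at ha
    have h1 : (fun i => eval t (a i)) ∈ Metric.eball (0 : ι → ℂ) r := by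
      refine lt_of_le_of_lt ?_ (show edist a 0 < r from har)
      simp only [edist_zero_right]
      rw [enorm_le_iff_norm_le]
      exact (pi_norm_le_iff_of_nonneg (norm_nonneg _)).2 fun i =>
        (norm_eval_le ht _).trans (norm_le_pi_norm a i)
    have h2 := hp.hasSum h1
    rw [zero_add] at h2
    have h3 := (eval t).hasSum ha
    simp only [eval_extendScalars ht] at h3
    exact h3.unique h2

end Wiener

/-! ### Inverting `y ↦ y(q ∘ t) - D y(t)` -/

/-- The resolvent of `D` is bounded on closed sets avoiding the spectrum, even on unbounded ones,
because it tends to `0` at infinity. -/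
lemma exists_resolvent_bound {n : ℕ} (D : Matrix (Fin n) (Fin n) ℂ) (K : Set ℂ) (hK : IsClosed K)
    (h : ∀ μ ∈ spectrum ℂ D, μ ∉ K) :
    ∃ C : ℝ, ∀ z ∈ K, IsUnit (algebraMap ℂ _ z - D) ∧ ∀ j k, ‖resolvent D z j k‖ ≤ C := by
  let _ := Matrix.linftyOpNormedRing (n := Fin n) (α := ℂ)
  let _ := Matrix.linftyOpNormedAlgebra (n := Fin n) (R := ℂ) (α := ℂ)
  have hr : ∀ z ∈ K, z ∈ resolventSet ℂ D := fun z hz => by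
    by_contra hc
    exact h z hc hz
  have : ∀ j k, ∃ C : ℝ, ∀ z ∈ K, ‖resolvent D z j k‖ ≤ C := by
    intro j k
    have hcont : ContinuousOn (fun z => resolvent D z j k) K := fun z hz => by
      have h1 : ContinuousAt (resolvent D) z :=
        (spectrum.hasDerivAt_resolvent_const_left (hr z hz)).continuousAt
      exact ((continuous_id.matrix_elem j k).continuousAt.comp h1).continuousWithinAt
    have hlim : Tendsto (fun z => resolvent D z j k) (Bornology.cobounded ℂ) (nhds 0) :=
      ((continuous_id.matrix_elem j k).tendsto (0 : Matrix (Fin n) (Fin n) ℂ)).comp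
        (spectrum.resolvent_tendsto_cobounded D)
    have hev := hlim.norm.eventually (gt_mem_nhds (show ‖(0 : ℂ)‖ < 1 by simp))
    obtain ⟨R, hR⟩ : ∃ R : ℝ, ∀ z : ℂ, R < ‖z‖ → ‖resolvent D z j k‖ < 1 := by
      rw [← comap_norm_atTop, eventually_comap] at hev
      obtain ⟨R, hR⟩ := eventually_atTop.1 hev
      exact ⟨R, fun z hz => hR _ hz.le z rfl⟩
    have hc : IsCompact (K ∩ Metric.closedBall 0 R) := (isCompact_closedBall 0 R).inter_left hK
    obtain ⟨C, hC⟩ := hc.exists_bound_of_continuousOn (hcont.mono Set.inter_subset_left)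
    refine ⟨max C 1, fun z hz => ?_⟩
    rcases le_or_gt ‖z‖ R with hzR | hzR
    · exact (hC z ⟨hz, by simpa using hzR⟩).trans (le_max_left _ _)
    · exact (hR z hzR).le.trans (le_max_right _ _)
  choose C hC using this
  refine ⟨∑ j, ∑ k, |C j k|, fun z hz => ⟨hr z hz, fun j k => (hC j k z hz).trans ?_⟩⟩
  calc C j k ≤ |C j k| := le_abs_self _
    _ ≤ ∑ k, |C j k| := Finset.single_le_sum (fun k _ => abs_nonneg (C j k)) (Finset.mem_univ k)
    _ ≤ _ := Finset.single_le_sum (f := fun j => ∑ k, |C j k|)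
      (fun j _ => Finset.sum_nonneg fun k _ => abs_nonneg _) (Finset.mem_univ j)

section Solution

open Wiener

/-- The symbol `(q ^ α - D)⁻¹` of the inverse of `y ↦ y(q ∘ t) - D y(t)` on series without constant
term. It is `0` at `α = 0`, where `1 - D` may be singular. -/
def symbolInv {m n : ℕ} (q : Fin m → ℂ) (D : Matrix (Fin n) (Fin n) ℂ) (α : Fin m →₀ ℕ) :
    Matrix (Fin n) (Fin n) ℂ :=
  if α = 0 then 0 else resolvent D (∏ i, q i ^ α i)

section

variable {m n : ℕ} {q : Fin m → ℂ} {D : Matrix (Fin n) (Fin n) ℂ}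

lemma exists_symbolInv_bound
    (hspec : ∀ μ ∈ spectrum ℂ D,
      μ ∉ closure {x : ℂ | ∃ α : Fin m → ℕ, α ≠ 0 ∧ ∏ i, q i ^ α i = x}) :
    ∃ C : ℝ, ∀ α j k, ‖symbolInv q D α j k‖ ≤ C := by
  obtain ⟨C, hC⟩ := exists_resolvent_bound D _ isClosed_closure hspec
  refine ⟨max C 0, fun α j k => ?_⟩
  unfold symbolInv
  split_ifs with h
  · simp
  · refine ((hC _ (subset_closure ⟨α, ?_, rfl⟩)).2 j k).trans (le_max_left _ _)
    simpa using h

lemma symbol_mul_symbolInv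
    (hspec : ∀ μ ∈ spectrum ℂ D,
      μ ∉ closure {x : ℂ | ∃ α : Fin m → ℕ, α ≠ 0 ∧ ∏ i, q i ^ α i = x})
    (α : Fin m →₀ ℕ) (j k : Fin n) :
    (∏ i, q i ^ α i) * symbolInv q D α j k - ∑ l, D j l * symbolInv q D α l k =
      if α = 0 then 0 else if j = k then 1 else 0 := by
  by_cases h : α = 0
  · simp [symbolInv, h]
  · obtain ⟨C, hC⟩ := exists_resolvent_bound D _ isClosed_closure hspec
    have hu := (hC _ (subset_closure ⟨α, by simpa using h, rfl⟩)).1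
    have h1 := congrArg (fun M => M j k) (Ring.mul_inverse_cancel _ hu)
    simp only [symbolInv, h, if_false, resolvent]
    rw [sub_mul, ← Algebra.smul_def] at h1
    simpa [Matrix.mul_apply, Matrix.one_apply] using h1

/-- The multipliers of symbol `symbolInv q D` form a right inverse of `y ↦ y(q ∘ t) - D y(t)` up to
constant terms: `(L S a)(t) = a(t) - a(0)`. -/
lemma eval_multiplier
    (hspec : ∀ μ ∈ spectrum ℂ D,
      μ ∉ closure {x : ℂ | ∃ α : Fin m → ℕ, α ≠ 0 ∧ ∏ i, q i ^ α i = x})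
    {t : Fin m → ℂ} (ht : ‖t‖ ≤ 1) (hqt : ‖fun i => q i * t i‖ ≤ 1)
    (j k : Fin n) (a : Wiener m) :
    eval (fun i => q i * t i) (multiplier (fun α => symbolInv q D α j k) a) -
      ∑ l, D j l * eval t (multiplier (fun α => symbolInv q D α l k) a) =
      if j = k then eval t a - eval 0 a else 0 := by
  obtain ⟨C, hC⟩ := exists_symbolInv_bound hspec
  have h0 : ‖(0 : Fin m → ℂ)‖ ≤ 1 := by simp
  have : (eval (fun i => q i * t i)).comp (multiplier (fun α => symbolInv q D α j k)) -
      ∑ l, D j l • (eval t).comp (multiplier (fun α => symbolInv q D α l k)) =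
      if j = k then eval t - eval 0 else 0 := by
    refine ext_mono fun α => ?_
    have h1 := symbol_mul_symbolInv hspec α j k
    have h2 : eval (0 : Fin m → ℂ) (mono α) = if α = 0 then 1 else 0 := by
      split_ifs with hα
      · rw [hα, mono_zero, eval_one h0]
      · obtain ⟨i, hi⟩ := Finsupp.ne_iff.1 hα
        rw [eval_mono h0]
        exact Finset.prod_eq_zero (Finset.mem_univ i) (by simpa using hi)
    have h3 : ∀ l, multiplier (fun α => symbolInv q D α l k) (mono α) =
        symbolInv q D α l k • mono α := fun l => multiplier_mono (hC · l k) α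
    have h4 : (if j = k then eval t - eval 0 else 0 : Wiener m →L[ℂ] ℂ) (mono α) =
        (∏ i, t i ^ α i) * (if α = 0 then 0 else if j = k then 1 else 0) := by
      by_cases hjk : j = k <;> by_cases hα : α = 0
      · simp [hjk, hα, mono_zero, eval_one ht, eval_one h0]
      · simp [h2, hjk, hα, eval_mono ht]
      · simp [hjk]
      · simp [hjk]
    rw [h4, ← h1]
    simp only [_root_.sub_apply, ContinuousLinearMap.comp_apply,
      _root_.sum_apply, _root_.smul_apply, h3, map_smul, eval_mono ht,
      eval_mono hqt, smul_eq_mul, mul_pow, Finset.prod_mul_distrib]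
    rw [mul_sub, Finset.mul_sum]
    congr 1
    · ring
    · exact Finset.sum_congr rfl fun l _ => by ring
  have h5 := DFunLike.congr_fun this a
  simp only [_root_.sub_apply, ContinuousLinearMap.comp_apply,
      _root_.sum_apply, _root_.smul_apply, smul_eq_mul] at h5
  rw [h5]
  split_ifs <;> rfl

lemma eval_zero_multiplier
    (hspec : ∀ μ ∈ spectrum ℂ D,
      μ ∉ closure {x : ℂ | ∃ α : Fin m → ℕ, α ≠ 0 ∧ ∏ i, q i ^ α i = x})
    (j k : Fin n) (a : Wiener m) :
    eval 0 (multiplier (fun α => symbolInv q D α j k) a) = 0 := by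
  obtain ⟨C, hC⟩ := exists_symbolInv_bound hspec
  have h0 : ‖(0 : Fin m → ℂ)‖ ≤ 1 := by simp
  have : (eval 0).comp (multiplier (fun α => symbolInv q D α j k)) = 0 := by
    refine ext_mono fun α => ?_
    simp only [ContinuousLinearMap.comp_apply, multiplier_mono (hC · j k) α, map_smul]
    by_cases hα : α = 0
    · simp [symbolInv, hα]
    · obtain ⟨i, hi⟩ := Finsupp.ne_iff.1 hα
      rw [eval_mono h0, Finset.prod_eq_zero (Finset.mem_univ i) (by simpa using hi)]
      simp
  exact DFunLike.congr_fun this a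

/-! ### Existence -/

/-- Solution of `y(q ∘ t) - D y(t) = h(s t, y(t))` with `y(0) = 0` for some scaling factor `s > 0`,
when `h` vanishes at the origin together with its derivative in the second variable. -/
theorem exists_solution_of_flat
    (hspec : ∀ μ ∈ spectrum ℂ D,
      μ ∉ closure {x : ℂ | ∃ α : Fin m → ℕ, α ≠ 0 ∧ ∏ i, q i ^ α i = x})
    (h : Fin n → (Fin m ⊕ Fin n → ℂ) → ℂ)
    (han : ∀ j, AnalyticAt ℂ (h j) 0) (h0 : ∀ j, h j 0 = 0)
    (hder : ∀ j k, fderiv ℂ (h j) 0 (Pi.single (Sum.inr k) 1) = 0) :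
    ∃ s : ℝ, 0 < s ∧ ∃ b : Fin n → Wiener m,
      (∀ j, eval 0 (b j) = 0) ∧
      ∀ t : Fin m → ℂ, ‖t‖ ≤ 1 → ‖fun i => q i * t i‖ ≤ 1 → ∀ j,
        eval (fun i => q i * t i) (b j) - ∑ l, D j l * eval t (b l) =
          h j (Sum.elim (fun i => s * t i) fun k => eval t (b k)) := by
  choose g hg0 hg' hgev using fun j => exists_functional_calculus m (han j) (h0 j)
  choose g' hgd hg'a using hg'
  let Λ : ℂ × (Fin n → Wiener m) →L[ℂ] (Fin m ⊕ Fin n → Wiener m) :=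
    ContinuousLinearMap.pi (Sum.elim
      (fun i => (ContinuousLinearMap.fst ℂ ℂ (Fin n → Wiener m)).smulRight (coord i))
      (fun k => (ContinuousLinearMap.proj k).comp (ContinuousLinearMap.snd ℂ ℂ (Fin n → Wiener m))))
  have hΛl (x) (i) : Λ x (Sum.inl i) = x.1 • coord i := rfl
  have hΛr (x) (k) : Λ x (Sum.inr k) = x.2 k := rfl
  let S : (Fin n → Wiener m) →L[ℂ] (Fin n → Wiener m) :=
    ContinuousLinearMap.pi fun j => ∑ k,
      (multiplier fun α => symbolInv q D α j k).comp (ContinuousLinearMap.proj k)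
  have hS (a) (j) : S a j = ∑ k, multiplier (fun α => symbolInv q D α j k) (a k) := by
    simp [S]
  -- With `L y = y(q ∘ t) - D y` and `S` its right inverse, a zero of the second component of
  -- `Ψ(s, b) = (s, b - S(h(s t, b)))` solves the equation. Since `h` has no linear part in `b`, the
  -- derivative of `Ψ` at `0` is unipotent, so `Ψ` is open at `0` and `(s, 0)` has a preimage for
  -- every small `s`.
  let Ψ : ℂ × (Fin n → Wiener m) → ℂ × (Fin n → Wiener m) := fun x =>
    (x.1, x.2 - S fun j => g j (Λ x))
  let G' : ℂ × (Fin n → Wiener m) →L[ℂ] (Fin n → Wiener m) :=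
    ContinuousLinearMap.pi fun j => (g' j).comp Λ
  let Ψ' : ℂ × (Fin n → Wiener m) →L[ℂ] ℂ × (Fin n → Wiener m) :=
    (ContinuousLinearMap.fst ℂ ℂ (Fin n → Wiener m)).prod
      (ContinuousLinearMap.snd ℂ ℂ (Fin n → Wiener m) - S.comp G')
  have hΨ : HasStrictFDerivAt Ψ Ψ' 0 := by
    have hG : HasStrictFDerivAt (fun x j => g j (Λ x)) G' 0 := by
      refine hasStrictFDerivAt_pi.2 fun j => ?_
      exact HasStrictFDerivAt.comp (g := g j) (g' := g' j) (0 : ℂ × (Fin n → Wiener m))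
        (by rw [map_zero]; exact hgd j) Λ.hasStrictFDerivAt
    exact hasStrictFDerivAt_fst.prodMk
      (hasStrictFDerivAt_snd.sub (S.hasStrictFDerivAt.comp (0 : ℂ × (Fin n → Wiener m)) hG))
  have hG'z (x : ℂ × (Fin n → Wiener m)) : G' x = G' (x.1, 0) := by
    ext j
    simp only [G', ContinuousLinearMap.pi_apply, ContinuousLinearMap.comp_apply, hg'a,
      Fintype.sum_sum_type, hΛl, hΛr, hder, zero_smul]
  have hsurj : Ψ'.range = ⊤ := by
    refine LinearMap.range_eq_top.2 fun y => ⟨(y.1, y.2 + S (G' (y.1, 0))), ?_⟩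
    change (y.1, y.2 + S (G' (y.1, 0)) - S (G' (y.1, y.2 + S (G' (y.1, 0))))) = y
    rw [hG'z (y.1, y.2 + S (G' (y.1, 0)))]
    simp
  have hmap := hΨ.map_nhds_eq_of_surj hsurj
  have hΨ0 : Ψ 0 = 0 := by
    have : (fun j => g j 0) = 0 := funext hg0
    simp [Ψ, this]
  rw [hΨ0] at hmap
  have hgood : ∀ᶠ x in nhds (0 : ℂ × (Fin n → Wiener m)), ∀ j, ∀ t : Fin m → ℂ, ‖t‖ ≤ 1 →
      eval t (g j (Λ x)) = h j fun i => eval t (Λ x i) := by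
    refine eventually_all.2 fun j => ?_
    have : Tendsto Λ (nhds 0) (nhds 0) := by simpa using Λ.continuous.tendsto 0
    exact this.eventually (hgev j)
  have himg := image_mem_map (m := Ψ) hgood
  rw [hmap] at himg
  have hline : Tendsto (fun s : ℝ => ((s : ℂ), (0 : Fin n → Wiener m))) (nhdsWithin 0 (Set.Ioi 0))
      (nhds 0) := by
    have : Continuous (fun s : ℝ => ((s : ℂ), (0 : Fin n → Wiener m))) := by fun_prop
    exact (this.tendsto' 0 0 (by simp)).mono_left nhdsWithin_le_nhds
  obtain ⟨s, ⟨⟨s', b⟩, hx, hxs⟩, hs⟩ := ((hline.eventually himg).and self_mem_nhdsWithin).exists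
  have hs' : s' = s := congrArg Prod.fst hxs
  subst hs'
  have hb : b = S fun j => g j (Λ (s, b)) := sub_eq_zero.1 (congrArg Prod.snd hxs)
  have hbj (j) : b j = ∑ k, multiplier (fun α => symbolInv q D α j k) (g k (Λ (s, b))) := by
    conv_lhs => rw [hb, hS]
  have hn0 : ‖(0 : Fin m → ℂ)‖ ≤ 1 := by simp
  have hb0 (j) : eval 0 (b j) = 0 := by
    rw [hbj, map_sum]
    exact Finset.sum_eq_zero fun k _ => eval_zero_multiplier hspec j k _
  have harg (t : Fin m → ℂ) (ht : ‖t‖ ≤ 1) : (fun i => eval t (Λ (s, b) i)) =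
      Sum.elim (fun i => s * t i) fun k => eval t (b k) := by
    funext i
    rcases i with i | i
    · simp [hΛl, eval_coord ht]
    · simp [hΛr]
  refine ⟨s, hs, b, hb0, fun t ht hqt j => ?_⟩
  rw [← harg t ht, ← hx j t ht]
  -- the constant term lost in `eval_multiplier` is zero
  have hz : eval 0 (g j (Λ (s, b))) = 0 := by
    rw [hx j 0 hn0, harg 0 hn0, ← h0 j]
    congr 1
    funext i
    rcases i with i | i <;> simp [hb0]
  have key : eval (fun i => q i * t i) (b j) - ∑ l, D j l * eval t (b l) =
      ∑ k, if j = k then eval t (g k (Λ (s, b))) - eval 0 (g k (Λ (s, b))) else 0 := by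
    simp_rw [← eval_multiplier hspec ht hqt]
    rw [Finset.sum_sub_distrib, Finset.sum_comm, hbj j, map_sum]
    congr 1
    refine Finset.sum_congr rfl fun l _ => ?_
    rw [hbj l, map_sum, Finset.mul_sum]
  rw [key]
  simp [hz]
end

/-- The matrix of partial derivatives of `H` in the second variable represents its Fréchet
derivative in that variable. -/
lemma fderiv_snd_apply {m n : ℕ} {Y : Fin n → ℂ} {H : (Fin m → ℂ) → (Fin n → ℂ) → (Fin n → ℂ)}
    {D : Matrix (Fin n) (Fin n) ℂ} {F' : (Fin m → ℂ) × (Fin n → ℂ) →L[ℂ] (Fin n → ℂ)}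
    (hF : HasFDerivAt (fun p : (Fin m → ℂ) × (Fin n → ℂ) => H p.1 p.2) F' (0, Y))
    (hD : ∀ j k, HasDerivAt (fun z : ℂ => H 0 (Function.update Y k z) j) (D j k) (Y k))
    (v : Fin n → ℂ) : F' (0, v) = D.mulVec v := by
  have hcol (k) : F' (0, Pi.single k 1) = fun j => D j k := by
    have h1 : HasDerivAt (fun z : ℂ => ((0 : Fin m → ℂ), Function.update Y k z))
        (0, Pi.single k 1) (Y k) := (hasDerivAt_const _ _).prodMk (hasDerivAt_update Y k _)
    have h2 : HasDerivAt (fun z : ℂ => H 0 (Function.update Y k z)) (F' (0, Pi.single k 1)) (Y k) :=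
      HasFDerivAt.comp_hasDerivAt (l := fun p : (Fin m → ℂ) × (Fin n → ℂ) => H p.1 p.2) (Y k)
        (by simpa using hF) h1
    funext j
    exact (hasDerivAt_pi.1 h2 j).unique (hD j k)
  have hv : ((0 : Fin m → ℂ), v) = ∑ k, v k • ((0 : Fin m → ℂ), (Pi.single k 1 : Fin n → ℂ)) := by
    ext i
    · simp [Prod.fst_sum]
    · simp [Prod.snd_sum, Finset.sum_apply, Pi.single_apply]
  rw [hv, map_sum]
  simp only [map_smul, hcol]
  funext j
  simp [Matrix.mulVec, dotProduct, Finset.sum_apply, mul_comm]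

/-- The solution is `Y + b(t / s)`, where `b` solves the equation whose nonlinearity `h` is `H`,
recentred at `(0, Y)`, minus its linear part in `y`. -/
theorem exists_analytic_solution {m n : ℕ} {q : Fin m → ℂ} {Y : Fin n → ℂ}
    {H : (Fin m → ℂ) → (Fin n → ℂ) → (Fin n → ℂ)}
    (hH : AnalyticAt ℂ (fun p : (Fin m → ℂ) × (Fin n → ℂ) => H p.1 p.2) (0, Y))
    (hH0 : H 0 Y = Y)
    {D : Matrix (Fin n) (Fin n) ℂ}
    (hD : ∀ j k, HasDerivAt (fun z : ℂ => H 0 (Function.update Y k z) j) (D j k) (Y k))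
    (hspec : ∀ μ ∈ spectrum ℂ D,
      μ ∉ closure {x : ℂ | ∃ α : Fin m → ℕ, α ≠ 0 ∧ ∏ i, q i ^ α i = x}) :
    ∃ W : Set (Fin m → ℂ), IsOpen W ∧ (0 : Fin m → ℂ) ∈ W ∧
      ∃ y : (Fin m → ℂ) → Fin n → ℂ,
        (∀ t ∈ W, AnalyticAt ℂ y t) ∧ y 0 = Y ∧
        ∀ t ∈ W, (fun i => q i * t i) ∈ W → y (fun i => q i * t i) = H t (y t) := by
  let A' : (Fin m ⊕ Fin n → ℂ) →L[ℂ] (Fin m → ℂ) × (Fin n → ℂ) :=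
    (ContinuousLinearMap.pi fun i => ContinuousLinearMap.proj (Sum.inl i)).prod
      (ContinuousLinearMap.pi fun k => ContinuousLinearMap.proj (Sum.inr k))
  let L : Fin n → (Fin m ⊕ Fin n → ℂ) →L[ℂ] ℂ := fun j =>
    ∑ l, D j l • ContinuousLinearMap.proj (Sum.inr l)
  have hL (j x) : L j x = ∑ l, D j l * x (Sum.inr l) := by simp [L]
  let h : Fin n → (Fin m ⊕ Fin n → ℂ) → ℂ := fun j x =>
    H ((0, Y) + A' x).1 ((0, Y) + A' x).2 j - Y j - L j x
  have hA : AnalyticAt ℂ (fun x => ((0 : Fin m → ℂ), Y) + A' x) 0 :=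
    analyticAt_const.add (A'.analyticAt 0)
  have hHA : AnalyticAt ℂ (fun x => H ((0, Y) + A' x).1 ((0, Y) + A' x).2) 0 :=
    AnalyticAt.comp_of_eq (g := fun p : (Fin m → ℂ) × (Fin n → ℂ) => H p.1 p.2) hH hA (by simp)
  have han (j) : AnalyticAt ℂ (h j) 0 :=
    ((analyticAt_pi_iff.1 hHA j).sub analyticAt_const).sub ((L j).analyticAt 0)
  have h0 (j) : h j 0 = 0 := by simp [h, hH0]
  have hF := hH.differentiableAt.hasFDerivAt
  have hder (j k) : fderiv ℂ (h j) 0 (Pi.single (Sum.inr k) 1) = 0 := by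
    have h1 : HasFDerivAt (fun x => H ((0, Y) + A' x).1 ((0, Y) + A' x).2)
        ((fderiv ℂ (fun p : (Fin m → ℂ) × (Fin n → ℂ) => H p.1 p.2) (0, Y)).comp A') 0 :=
      HasFDerivAt.comp (g := fun p : (Fin m → ℂ) × (Fin n → ℂ) => H p.1 p.2) 0
        (by simpa using hF) (A'.hasFDerivAt.const_add _)
    have h2 := ((hasFDerivAt_pi'.1 h1 j).sub_const (Y j)).sub (L j).hasFDerivAt
    rw [HasFDerivAt.fderiv (f := h j) h2]
    have h3 : A' (Pi.single (Sum.inr k) 1) = (0, Pi.single k 1) := by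
      ext i <;> simp [A', Pi.single_apply]
    rw [_root_.sub_apply, ContinuousLinearMap.comp_apply, ContinuousLinearMap.comp_apply, h3,
      fderiv_snd_apply hF hD, hL]
    simp [Pi.single_apply]
  obtain ⟨s, hs, b, hb0, hb⟩ := exists_solution_of_flat hspec h han h0 hder
  have hsc : (s : ℂ) ≠ 0 := by exact_mod_cast hs.ne'
  have hscale {t : Fin m → ℂ} (ht : t ∈ Metric.ball (0 : Fin m → ℂ) s) : ‖(s : ℂ)⁻¹ • t‖ < 1 := by
    rw [norm_smul, norm_inv, Complex.norm_of_nonneg hs.le, inv_mul_lt_one₀ hs]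
    simpa using ht
  refine ⟨Metric.ball 0 s, Metric.isOpen_ball, Metric.mem_ball_self hs,
    fun t j => Y j + eval ((s : ℂ)⁻¹ • t) (b j), fun t ht => ?_, ?_, fun t ht hqt => ?_⟩
  · refine analyticAt_pi_iff.2 fun j => analyticAt_const.add ?_
    refine AnalyticAt.comp (g := fun t => eval t (b j)) (f := fun t => (s : ℂ)⁻¹ • t) ?_
      (by fun_prop)
    refine (hasFPowerSeriesOnBall_eval (b j)).analyticAt_of_mem ?_
    have := hscale ht
    rw [← ENNReal.ofReal_one, Metric.eball_ofReal]
    simpa using this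
  · funext j; simp [hb0]
  · funext j
    have he : (s : ℂ)⁻¹ • (fun i => q i * t i) = fun i => q i * ((s : ℂ)⁻¹ • t) i := by
      funext i; simp; ring
    have h1 := hb ((s : ℂ)⁻¹ • t) (hscale ht).le (by rw [← he]; exact (hscale hqt).le) j
    have h2 : A' (Sum.elim (fun i => s * ((s : ℂ)⁻¹ • t) i) fun k => eval ((s : ℂ)⁻¹ • t) (b k)) =
        (t, fun k => eval ((s : ℂ)⁻¹ • t) (b k)) := by
      ext i <;> simp [A', hsc]
    simp only [h, h2, hL, Sum.elim_inr] at h1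
    change Y j + eval ((s : ℂ)⁻¹ • fun i => q i * t i) (b j) =
      H t (fun k => Y k + eval ((s : ℂ)⁻¹ • t) (b k)) j
    rw [he]
    have h3 : ((0 : Fin m → ℂ), Y) + (t, fun k => eval ((s : ℂ)⁻¹ • t) (b k)) =
        (t, fun k => Y k + eval ((s : ℂ)⁻¹ • t) (b k)) := by ext <;> simp
    rw [h3] at h1
    linear_combination h1

/-! ### Uniqueness -/

open Asymptotics in
/-- A homogeneous function of degree `k` that is negligible compared with `‖x‖ ^ k` at `0` vanishes. -/
lemma eq_zero_of_homogeneous_isLittleO {E V : Type*} [NormedAddCommGroup E] [NormedSpace ℂ E]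
    [NormedAddCommGroup V] [NormedSpace ℂ V] {P : E → V} {k : ℕ}
    (hP : ∀ (c : ℂ) x, P (c • x) = c ^ k • P x)
    (ho : P =o[nhds 0] fun x => ‖x‖ ^ k) (x : E) : P x = 0 := by
  by_contra hx
  have hline : Tendsto (fun c : ℂ => c • x) (nhdsWithin 0 {0}ᶜ) (nhds 0) :=
    ((continuous_id.smul continuous_const).tendsto' (0 : ℂ) 0 (by simp)).mono_left
      nhdsWithin_le_nhds
  have hpos : 0 < ‖P x‖ / (2 * (‖x‖ ^ k + 1)) := by have := norm_pos_iff.2 hx; positivity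
  obtain ⟨c, hc, hc0⟩ :=
    ((hline.eventually (isLittleO_iff.1 ho hpos)).and self_mem_nhdsWithin).exists
  have hck : 0 < ‖c‖ ^ k := pow_pos (norm_pos_iff.2 hc0) k
  rw [hP, norm_smul, norm_pow, norm_pow, norm_norm, norm_smul, mul_pow] at hc
  have hc' : ‖P x‖ ≤ ‖P x‖ / (2 * (‖x‖ ^ k + 1)) * ‖x‖ ^ k := by
    refine le_of_mul_le_mul_left (hc.trans (le_of_eq ?_)) hck
    ring
  have hp := norm_pos_iff.2 hx
  have : ‖P x‖ / (2 * (‖x‖ ^ k + 1)) * ‖x‖ ^ k < ‖P x‖ := by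
    rw [div_mul_eq_mul_div, div_lt_iff₀ (by positivity)]
    nlinarith [pow_nonneg (norm_nonneg x) k]
  linarith

/-- A homogeneous polynomial map `P` with `P(q ∘ t) = D P(t)` and `P(0) = 0` vanishes: its coefficient
of index `α ≠ 0` is in the kernel of `q ^ α - D`, which is invertible. -/
lemma multilinear_diag_eq_zero {m n k : ℕ} {q : Fin m → ℂ} {D : Matrix (Fin n) (Fin n) ℂ}
    (hspec : ∀ μ ∈ spectrum ℂ D, ∀ α : Fin m → ℕ, α ≠ 0 → ∏ i, q i ^ α i ≠ μ)
    (p : ContinuousMultilinearMap ℂ (fun _ : Fin k => Fin m → ℂ) (Fin n → ℂ))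
    (hp0 : (p fun _ => 0) = 0)
    (hp : ∀ t : Fin m → ℂ, (p fun _ i => q i * t i) = D.mulVec (p fun _ => t)) (t : Fin m → ℂ) :
    (p fun _ => t) = 0 := by
  -- `R j` is the `j`-th component of `t ↦ p (t, …, t)`, as a polynomial
  let R : Fin n → MvPolynomial (Fin m) ℂ := fun j => ∑ w : Fin k → Fin m,
    (∏ i, MvPolynomial.X (w i)) * MvPolynomial.C (p (fun i => Pi.single (w i) 1) j)
  have hR (t j) : MvPolynomial.eval t (R j) = p (fun _ => t) j := by
    rw [map_multilinear_eq_sum]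
    simp [R, Finset.sum_apply]
  have hRq (j) : ∑ α ∈ (R j).support, MvPolynomial.monomial α ((∏ i, q i ^ α i) * (R j).coeff α) =
      ∑ l, MvPolynomial.C (D j l) * R l := by
    refine MvPolynomial.funext fun t => ?_
    have h1 : MvPolynomial.eval (fun i => q i * t i) (R j) =
        ∑ l, D j l * MvPolynomial.eval t (R l) := by
      simp only [hR]
      rw [hp]; rfl
    simp only [map_sum, map_mul, MvPolynomial.eval_C, ← h1, MvPolynomial.eval_monomial]
    rw [MvPolynomial.eval_eq']
    refine Finset.sum_congr rfl fun α _ => ?_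
    rw [Finsupp.prod_fintype _ _ (by simp)]
    simp only [mul_pow, Finset.prod_mul_distrib]
    ring
  have hcoef (α : Fin m →₀ ℕ) : (fun j => (R j).coeff α) = 0 := by
    by_cases hα : α = 0
    · funext j
      have := hR 0 j
      rw [MvPolynomial.eval_zero, MvPolynomial.constantCoeff_eq] at this
      rw [hα, this]
      exact congrFun hp0 j
    · have heq : (algebraMap ℂ (Matrix (Fin n) (Fin n) ℂ) (∏ i, q i ^ α i) - D).mulVec
          (fun j => (R j).coeff α) = 0 := by
        funext j
        have h1 := congrArg (MvPolynomial.coeff α) (hRq j)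
        simp only [MvPolynomial.coeff_sum, MvPolynomial.coeff_monomial, MvPolynomial.coeff_C_mul,
          Finset.sum_ite_eq', MvPolynomial.mem_support_iff] at h1
        have h2 : (∏ i, q i ^ α i) * (R j).coeff α = ∑ l, D j l * (R l).coeff α := by
          rw [← h1]
          split_ifs with h
          · rfl
          · rw [not_not.1 h, mul_zero]
        rw [Matrix.sub_mulVec, Algebra.algebraMap_eq_smul_one, Matrix.smul_mulVec, Matrix.one_mulVec]
        simp [Matrix.mulVec, dotProduct, h2]
      have hu : IsUnit (algebraMap ℂ (Matrix (Fin n) (Fin n) ℂ) (∏ i, q i ^ α i) - D) := by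
        by_contra hc
        exact hspec _ hc α (by simpa using hα) rfl
      obtain ⟨u, hu⟩ := hu
      rw [← hu] at heq
      rw [← Matrix.one_mulVec (fun j => (R j).coeff α), ← u.inv_mul, ← Matrix.mulVec_mulVec, heq,
        Matrix.mulVec_zero]
  funext j
  have hRj : R j = 0 := by
    ext α
    simpa using congrFun (hcoef α) j
  rw [← hR, hRj]
  simp

open Asymptotics in
/-- Uniqueness of the germ of solution. The difference `z` of two solutions satisfies
`z(q ∘ t) - D z(t) = o(z(t))`, so its lowest-degree homogeneous part `P` satisfies
`P(q ∘ t) = D P(t)` and vanishes. -/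
theorem germ_unique {m n : ℕ} {q : Fin m → ℂ} {Y : Fin n → ℂ}
    {H : (Fin m → ℂ) → (Fin n → ℂ) → (Fin n → ℂ)}
    (hH : AnalyticAt ℂ (fun p : (Fin m → ℂ) × (Fin n → ℂ) => H p.1 p.2) (0, Y))
    {D : Matrix (Fin n) (Fin n) ℂ}
    (hD : ∀ j k, HasDerivAt (fun z : ℂ => H 0 (Function.update Y k z) j) (D j k) (Y k))
    (hspec : ∀ μ ∈ spectrum ℂ D, ∀ α : Fin m → ℕ, α ≠ 0 → ∏ i, q i ^ α i ≠ μ)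
    {y₁ y₂ : (Fin m → ℂ) → Fin n → ℂ} (h₁ : AnalyticAt ℂ y₁ 0) (h₂ : AnalyticAt ℂ y₂ 0)
    (h₁0 : y₁ 0 = Y) (h₂0 : y₂ 0 = Y)
    (e₁ : ∀ᶠ t in nhds 0, y₁ (fun i => q i * t i) = H t (y₁ t))
    (e₂ : ∀ᶠ t in nhds 0, y₂ (fun i => q i * t i) = H t (y₂ t)) :
    y₁ =ᶠ[nhds 0] y₂ := by
  obtain ⟨p, hp⟩ := h₁.sub h₂
  set z : (Fin m → ℂ) → Fin n → ℂ := y₁ - y₂ with hz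
  let σ : (Fin m → ℂ) →L[ℂ] (Fin m → ℂ) :=
    ContinuousLinearMap.pi fun i => q i • ContinuousLinearMap.proj i
  have hσ (t) : σ t = fun i => q i * t i := by ext; simp [σ]
  have hσ0 : Tendsto σ (nhds 0) (nhds 0) := by simpa using σ.continuous.tendsto 0
  let DL : (Fin n → ℂ) →L[ℂ] (Fin n → ℂ) := LinearMap.toContinuousLinearMap D.mulVecLin
  have hDL (v) : DL v = D.mulVec v := rfl
  have hlin : (fun t => z (σ t) - DL (z t)) =o[nhds 0] z := by
    have hs := hH.hasStrictFDerivAt.isLittleO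
    have ht : Tendsto (fun t => ((t, y₁ t), (t, y₂ t))) (nhds 0)
        (nhds (((0 : Fin m → ℂ), Y), ((0 : Fin m → ℂ), Y))) := by
      have c₁ := h₁.continuousAt.tendsto
      have c₂ := h₂.continuousAt.tendsto
      rw [h₁0] at c₁
      rw [h₂0] at c₂
      exact (tendsto_id.prodMk_nhds c₁).prodMk_nhds (tendsto_id.prodMk_nhds c₂)
    have := hs.comp_tendsto ht
    refine (this.congr' ?_ ?_).trans_isBigO
      (IsBigO.of_bound 1 ?_ (f := fun t => ((0 : Fin m → ℂ), z t)))
    · filter_upwards [e₁, e₂] with t e₁ e₂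
      simp only [Function.comp_apply, Prod.mk_sub_mk, sub_self]
      rw [fderiv_snd_apply hH.hasStrictFDerivAt.hasFDerivAt hD, hDL, hσ, hz, Pi.sub_apply,
        Pi.sub_apply, e₁, e₂]
    · exact Eventually.of_forall fun t => by simp [hz]
    · exact Eventually.of_forall fun t => by simp
  have key (k : ℕ) : ∀ t : Fin m → ℂ, (p k fun _ => t) = 0 := by
    induction k using Nat.strong_induction_on with
    | _ k ih =>
      have hps : p.partialSum (k + 1) = fun t => p k fun _ => t := by
        funext t
        refine Finset.sum_eq_single _ (fun b hb hnb => ?_) fun hn => ?_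
        · exact ih b ((Finset.mem_range_succ_iff.1 hb).lt_of_ne hnb) t
        · exact absurd (Finset.mem_range.2 (Nat.lt_succ_self k)) hn
      have hrem := hp.isBigO_sub_partialSum_pow (k + 1)
      simp only [hps, zero_add] at hrem
      have hrem : (fun t => z t - p k fun _ => t) =o[nhds 0] fun t => ‖t‖ ^ k :=
        hrem.trans_isLittleO <| by
          have : (fun t : Fin m → ℂ => ‖t‖) =o[nhds 0] fun _ => (1 : ℝ) :=
            (isLittleO_one_iff ℝ).2 (by simpa using (continuous_norm (E := Fin m → ℂ)).tendsto 0)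
          simpa [pow_succ] using
            (isBigO_refl (fun t : Fin m → ℂ => ‖t‖ ^ k) (nhds 0)).mul_isLittleO this
      have hPO : (fun t => p k fun _ => t) =O[nhds 0] fun t : Fin m → ℂ => ‖t‖ ^ k :=
        IsBigO.of_bound ‖p k‖ <| Eventually.of_forall fun t => by
          simpa using (p k).le_opNorm fun _ => t
      have hzO : z =O[nhds 0] fun t : Fin m → ℂ => ‖t‖ ^ k := by
        simpa using hrem.isBigO.add hPO
      have hremσ : (fun t => z (σ t) - p k fun _ => σ t) =o[nhds 0] fun t : Fin m → ℂ => ‖t‖ ^ k :=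
        (hrem.comp_tendsto hσ0).trans_isBigO ((σ.isBigO_id (nhds 0)).norm_norm.pow k)
      have hremD := (DL.isBigO_comp (fun t => z t - p k fun _ => t) (nhds 0)).trans_isLittleO hrem
      have htot : (fun t => (p k fun _ => σ t) - DL (p k fun _ => t)) =o[nhds 0]
          fun t : Fin m → ℂ => ‖t‖ ^ k :=
        (((hlin.trans_isBigO hzO).sub hremσ).add hremD).congr_left fun t => by
          rw [map_sub]; abel
      have hhom (c : ℂ) (t : Fin m → ℂ) : (p k fun _ => c • t) = c ^ k • p k fun _ => t := by
        simpa using (p k).map_smul_univ (fun _ => c) fun _ => t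
      have hzero := eq_zero_of_homogeneous_isLittleO (fun c t => by
        rw [map_smul, hhom, hhom, map_smul, smul_sub]) htot
      refine multilinear_diag_eq_zero hspec (p k) ?_ fun t => ?_
      · rcases Nat.eq_zero_or_pos k with rfl | hk
        · have := hp.coeff_zero (fun _ => 0)
          rw [this, hz, Pi.sub_apply, h₁0, h₂0, sub_self]
        · have := hhom 0 0
          rwa [zero_pow hk.ne', zero_smul, zero_smul] at this
      · have := sub_eq_zero.1 (hzero t)
        rwa [hDL, hσ] at this
  have hz0 : ∀ᶠ t in nhds 0, z t = 0 := by
    filter_upwards [hp.eventually_hasSum] with t ht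
    rw [zero_add] at ht
    simp only [key] at ht
    exact ht.unique hasSum_zero
  filter_upwards [hz0] with t ht
  exact sub_eq_zero.1 ht

end Solution

end

theorem stmt2 (m n : ℕ) (hm : 1 ≤ m) (hn : 1 ≤ n)
    (q : Fin m → ℂ) (hq : ∀ i, q i ≠ 0)
    (Y : Fin n → ℂ)
    (H : (Fin m → ℂ) → (Fin n → ℂ) → (Fin n → ℂ))
    (hH : AnalyticAt ℂ (fun p : (Fin m → ℂ) × (Fin n → ℂ) => H p.1 p.2) (0, Y))
    (hH0 : H 0 Y = Y)
    (D : Matrix (Fin n) (Fin n) ℂ)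
    (hD : ∀ j k, HasDerivAt (fun z : ℂ => H 0 (Function.update Y k z) j) (D j k) (Y k))
    (hspec : ∀ μ ∈ spectrum ℂ D,
      μ ∉ closure {x : ℂ | ∃ α : Fin m → ℕ, α ≠ 0 ∧ ∏ i, q i ^ α i = x}) :
    (∃ W : Set (Fin m → ℂ), IsOpen W ∧ (0 : Fin m → ℂ) ∈ W ∧
      ∃ y : (Fin m → ℂ) → Fin n → ℂ,
        (∀ t ∈ W, AnalyticAt ℂ y t) ∧ y 0 = Y ∧
        ∀ t ∈ W, (fun i => q i * t i) ∈ W → y (fun i => q i * t i) = H t (y t)) ∧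
    (∀ (W₁ W₂ : Set (Fin m → ℂ)) (y₁ y₂ : (Fin m → ℂ) → Fin n → ℂ),
      IsOpen W₁ → (0 : Fin m → ℂ) ∈ W₁ →
      (∀ t ∈ W₁, AnalyticAt ℂ y₁ t) → y₁ 0 = Y →
      (∀ t ∈ W₁, (fun i => q i * t i) ∈ W₁ → y₁ (fun i => q i * t i) = H t (y₁ t)) →
      IsOpen W₂ → (0 : Fin m → ℂ) ∈ W₂ →
      (∀ t ∈ W₂, AnalyticAt ℂ y₂ t) → y₂ 0 = Y →
      (∀ t ∈ W₂, (fun i => q i * t i) ∈ W₂ → y₂ (fun i => q i * t i) = H t (y₂ t)) →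
      y₁ =ᶠ[nhds (0 : Fin m → ℂ)] y₂) := by
  refine ⟨exists_analytic_solution hH hH0 hD hspec, ?_⟩
  intro W₁ W₂ y₁ y₂ o₁ m₁ a₁ z₁ e₁ o₂ m₂ a₂ z₂ e₂
  have hnear {W : Set (Fin m → ℂ)} (o : IsOpen W) (m₀ : (0 : Fin m → ℂ) ∈ W) :
      ∀ᶠ t in nhds 0, t ∈ W ∧ (fun i => q i * t i) ∈ W := by
    have hc : Tendsto (fun (t : Fin m → ℂ) i => q i * t i) (nhds 0) (nhds 0) :=
      Continuous.tendsto' (by fun_prop) _ _ (by ext; simp)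
    exact (o.eventually_mem m₀).and (hc.eventually (o.eventually_mem m₀))
  refine germ_unique hH hD (fun μ hμ α hα hc => hspec μ hμ (subset_closure ⟨α, hα, hc⟩))
    (a₁ 0 m₁) (a₂ 0 m₂) z₁ z₂ ?_ ?_
  · filter_upwards [hnear o₁ m₁] with t ht using e₁ t ht.1 ht.2
  · filter_upwards [hnear o₂ m₂] with t ht using e₂ t ht.1 ht.2
end

section
/- (q-Briot–Bouquet theorem, uniform in q.) Let m, n ≥ 1 and let U be an open subset of the open unit polydisc {q ∈ ℂ^m : |q_i| < 1 for all i}. Suppose H(t, y; q) ∈ ℂⁿ is, for every q₀ ∈ U, analytic in (t, y, q) at (0, 0, q₀) and satisfies H(0, 0; q) = 0 for all q ∈ U. Let D(q) be the n×n Jacobian matrix (∂H_j/∂y_k)(0, 0; q). Assume that for every q ∈ U no eigenvalue of D(q) lies in the set {0} ∪ {q₁^{α₁}⋯q_m^{α_m} : α ∈ ℕ^m, α ≠ 0}. Then for every q₀ ∈ U there exist an open neighborhood Z of 0 in ℂ^m and an open neighborhood V ⊆ U of q₀, together with an analytic map y : Z × V → ℂⁿ with y(0, q) = 0 for all q ∈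 V, such that y(q∘t, q) = H(t, y(t, q); q) whenever q ∈ V and both t and q∘t := (q₁t₁,…,q_m t_m) lie in Z. -/
/-!
The equation is read as `y (q * t, q) = H (t, y (t, q), q)`, where `q * t` is the coordinatewise
product, and is solved by Newton-like correction of a truncated formal solution, with the parameter
`q` carried along as a variable.

*Formal part.* Comparing the coefficients of `t ^ α` gives `(q ^ α - D q) a_α(q) = known terms`. The
spectral hypothesis makes the operators `q ^ α - D q`, `α ≠ 0`, invertible near `q₀` (on a
neighbourhood that may shrink with `α`), so for every `k` there is an analytic `P` with `P (0, q) = 0`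
whose residual `P (q * t, q) - H (t, P (t, q), q)` is `O(‖t‖ ^ (k + 1))`: `exists_approx`.

*Analytic part.* As `0` is not an eigenvalue, `A = (D q₀)⁻¹` exists, and the equation says that `y`
is a fixed point of `y ↦ y + A (y (q * t, q) - H (t, y (t, q), q))`. In the value of `y` at `(t, q)`
this map contracts with factor `1 / 4` near the origin; the value at `(q * t, q)` enters through `A`,
which need not be small. But `‖q * t‖ ≤ r ‖t‖` with `r < 1` since `q₀` lies in the open polydisc, so
on differences that are `O(‖t‖ ^ (k + 1))` this term has factor `‖A‖ r ^ (k + 1) ≤ 1 / 4` for `k`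
large. Starting from `P`, the iterates therefore converge geometrically on a fixed polydisc
(`exists_solution`), and their uniform limit is analytic. Only one order `k` is needed, so the
neighbourhoods for the different `α` do no harm.

Analyticity of a uniform limit of analytic functions of several variables is obtained from Osgood's
lemma (`osgoodProperty_of_finiteDimensional`): a continuous function that is holomorphic along
complex lines is analytic. Its proof is by induction on the dimension, through Cauchy's formula in
one variable, the remaining variables being absorbed into a function with values in `C(circle, F)`.
-/

/-! ### Osgood's lemma and uniform limits of analytic functions -/

open Metric in
/-- A continuous curve in `C(K, F)` that is holomorphic after every evaluation is holomorphic: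
evaluations separate points, so Cauchy's formula holds for the curve itself. -/
theorem differentiableAt_of_eval {K F : Type} [TopologicalSpace K] [CompactSpace K]
    [NormedAddCommGroup F] [NormedSpace ℂ F] [CompleteSpace F] {O : Set ℂ} (hO : IsOpen O)
    {h : ℂ → C(K, F)} (hc : ContinuousOn h O)
    (hd : ∀ ζ : K, DifferentiableOn ℂ (fun z => h z ζ) O) {z₀ : ℂ} (hz₀ : z₀ ∈ O) :
    DifferentiableAt ℂ h z₀ := by
  obtain ⟨R, hR, hRO⟩ := nhds_basis_closedBall.mem_iff.1 (hO.mem_nhds hz₀)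
  lift R to NNReal using hR.le
  have hcs : ContinuousOn h (sphere z₀ R) := hc.mono (sphere_subset_closedBall.trans hRO)
  have hci : CircleIntegrable h z₀ R := hcs.circleIntegrable R.2
  have key : ∀ w ∈ ball z₀ (R : ℝ),
      (2 * ↑Real.pi * Complex.I)⁻¹ • (∮ z in C(z₀, (R : ℝ)), (z - w)⁻¹ • h z) = h w := by
    intro w hw
    ext ζ
    have h1 := (DifferentiableOn.mono (hd ζ) (closure_ball_subset_closedBall.trans hRO)).diffContOnCl
      |>.two_pi_i_inv_smul_circleIntegral_sub_inv_smul hw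
    rw [← h1, ContinuousMap.smul_apply]
    congr 1
    have h2 := ContinuousLinearMap.intervalIntegral_comp_comm (μ := MeasureTheory.volume)
      (a := 0) (b := 2 * Real.pi) (ContinuousMap.evalCLM ℂ ζ : C(K, F) →L[ℂ] F)
      (f := fun θ => deriv (circleMap z₀ R) θ •
        ((circleMap z₀ R θ - w)⁻¹ • h (circleMap z₀ R θ))) ?_
    · rw [circleIntegral, circleIntegral]
      exact h2.symm
    · refine (ContinuousOn.circleIntegrable R.2 (f := fun z => (z - w)⁻¹ • h z) ?_).out
      refine ContinuousOn.smul (ContinuousOn.inv₀ (f := fun z : ℂ => z - w) (by fun_prop) ?_) hcs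
      intro x hx h0
      rw [sub_eq_zero] at h0
      subst h0
      exact absurd hx hw.ne
  have h3 := (hasFPowerSeriesOn_cauchy_integral hci (by exact_mod_cast hR)).analyticAt
  refine (h3.congr ?_).differentiableAt
  filter_upwards [ball_mem_nhds z₀ hR] with w hw using key w hw

/-- The statement of Osgood's lemma on `G`: a continuous function on an open subset of `G`, with
values in a complex Banach space, that is holomorphic along every complex line is analytic. All
directions `v` are allowed, not only those of a basis, which makes the property invariant under
linear isomorphisms. -/
def OsgoodProperty (G : Type) [NormedAddCommGroup G] [NormedSpace ℂ G] : Prop :=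
  ∀ (F : Type) [NormedAddCommGroup F] [NormedSpace ℂ F] [CompleteSpace F] (U : Set G) (f : G → F),
    IsOpen U → ContinuousOn f U →
    (∀ w ∈ U, ∀ v : G, DifferentiableAt ℂ (fun z : ℂ => f (w + z • v)) 0) →
    ∀ w ∈ U, AnalyticAt ℂ f w

theorem OsgoodProperty.of_equiv {G G' : Type} [NormedAddCommGroup G] [NormedSpace ℂ G]
    [NormedAddCommGroup G'] [NormedSpace ℂ G'] (e : G ≃L[ℂ] G') (h : OsgoodProperty G) :
    OsgoodProperty G' := by
  intro F _ _ _ U f hU hc hd w hw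
  have h1 := h F (e ⁻¹' U) (f ∘ e) (hU.preimage e.continuous)
    (hc.comp e.continuous.continuousOn (fun x hx => hx))
    (fun x hx v => by simpa using hd (e x) hx (e v)) (e.symm w) (by simpa using hw)
  have h2 : AnalyticAt ℂ ((f ∘ e) ∘ e.symm) w :=
    AnalyticAt.comp (f := e.symm) h1 ((e.symm : G' →L[ℂ] G).analyticAt w)
  simpa [Function.comp_def] using h2

theorem osgoodProperty_of_subsingleton {G : Type} [NormedAddCommGroup G] [NormedSpace ℂ G]
    [Subsingleton G] : OsgoodProperty G := by
  intro F _ _ _ U f hU hc hd w hw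
  have : f = fun _ => f w := by ext x; rw [Subsingleton.elim x w]
  rw [this]
  exact analyticAt_const

open Metric in
/-- The Cauchy pairing `(k, φ) ↦ ∮ k φ` on the circle of centre `c` and radius `r`, as a continuous
bilinear map on spaces of continuous functions. -/
noncomputable def circlePairing (F : Type) [NormedAddCommGroup F] [NormedSpace ℂ F]
    (c : ℂ) {r : ℝ} (hr : 0 ≤ r) :
    C(sphere c r, ℂ) →L[ℂ] C(sphere c r, F) →L[ℂ] F :=
  let γ : ℝ → sphere c r := fun θ => ⟨circleMap c r θ, circleMap_mem_sphere c hr θ⟩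
  have hγ : Continuous γ := (continuous_circleMap c r).subtype_mk _
  have hγ' : Continuous (deriv (circleMap c r)) := by
    have : deriv (circleMap c r) = fun θ => circleMap 0 r θ * Complex.I := by
      ext θ; exact deriv_circleMap c r θ
    rw [this]; fun_prop
  have hint : ∀ (k : C(sphere c r, ℂ)) (φ : C(sphere c r, F)), IntervalIntegrable
      (fun θ => deriv (circleMap c r) θ • (k (γ θ) • φ (γ θ))) MeasureTheory.volume
      0 (2 * Real.pi) := fun k φ => by
    apply Continuous.intervalIntegrable
    fun_prop
  LinearMap.mkContinuous₂
    (LinearMap.mk₂ ℂ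
      (fun k φ => ∫ θ in (0 : ℝ)..2 * Real.pi, deriv (circleMap c r) θ • (k (γ θ) • φ (γ θ)))
      (fun k k' φ => by
        rw [← intervalIntegral.integral_add (hint _ _) (hint _ _)]
        simp [add_smul])
      (fun a k φ => by
        rw [← intervalIntegral.integral_smul]
        congr 1; ext θ
        simp only [ContinuousMap.smul_apply, smul_eq_mul, smul_smul]
        congr 1; ring)
      (fun k φ φ' => by
        rw [← intervalIntegral.integral_add (hint _ _) (hint _ _)]
        simp [smul_add])
      (fun a k φ => by
        rw [← intervalIntegral.integral_smul]
        congr 1; ext θ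
        simp only [ContinuousMap.smul_apply, smul_smul]
        congr 1; ring))
    (r * (2 * Real.pi))
    (fun k φ => by
      have := intervalIntegral.norm_integral_le_of_norm_le_const (a := 0) (b := 2 * Real.pi)
        (f := fun θ => deriv (circleMap c r) θ • (k (γ θ) • φ (γ θ))) (C := r * (‖k‖ * ‖φ‖)) ?_
      · rw [sub_zero, abs_of_pos Real.two_pi_pos] at this
        calc _ ≤ _ := this
          _ = _ := by ring
      · intro θ _
        rw [norm_smul, norm_smul, deriv_circleMap, norm_mul, norm_circleMap_zero, Complex.norm_I,
          mul_one, abs_of_nonneg hr]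
        gcongr
        · exact k.norm_coe_le_norm _
        · exact φ.norm_coe_le_norm _)

open Metric in
theorem circlePairing_apply {F : Type} [NormedAddCommGroup F] [NormedSpace ℂ F]
    (c : ℂ) {r : ℝ} (hr : 0 ≤ r) (k : C(sphere c r, ℂ)) (φ : C(sphere c r, F)) (g : ℂ → F)
    (hg : ∀ ζ : sphere c r, k ζ • φ ζ = g ζ) :
    circlePairing F c hr k φ = ∮ z in C(c, r), g z := by
  rw [circleIntegral]
  change ∫ θ in (0 : ℝ)..2 * Real.pi, _ = _
  congr 1
  ext θ
  rw [hg]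

open Metric in
/-- The inductive step of Osgood's lemma. Cauchy's formula in the first variable presents `f (z, w)`
as the pairing of the kernel `ζ ↦ (ζ - z)⁻¹` with `φ w = (ζ ↦ f (ζ, w))`. The kernel is analytic in
`z`, being an inverse in a Banach algebra, and `φ` is analytic by the property of `G`. -/
theorem OsgoodProperty.prod {G : Type} [NormedAddCommGroup G] [NormedSpace ℂ G]
    (hG : OsgoodProperty G) : OsgoodProperty (ℂ × G) := by
  intro F _ _ _ U f hU hc hd p hp
  obtain ⟨z₀, w₀⟩ := p
  obtain ⟨r, hr, hrU⟩ := nhds_basis_closedBall.mem_iff.1 (hU.mem_nhds hp)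
  rw [← closedBall_prod_same] at hrU
  have hmem : ∀ z ∈ closedBall z₀ r, ∀ w ∈ ball w₀ r, (z, w) ∈ U := fun z hz w hw =>
    hrU ⟨hz, ball_subset_closedBall hw⟩
  let ψ : C(ball w₀ r × sphere z₀ r, F) :=
    ⟨fun x => f (x.2, x.1), by
      refine hc.comp_continuous (by fun_prop) ?_
      rintro ⟨⟨w, hw⟩, ⟨ζ, hζ⟩⟩
      exact hmem ζ (sphere_subset_closedBall hζ) w hw⟩
  classical
  let φ : G → C(sphere z₀ r, F) := fun w => if h : w ∈ ball w₀ r then ψ.curry ⟨w, h⟩ else 0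
  have hφ : ∀ w ∈ ball w₀ r, ∀ ζ, φ w ζ = f (ζ, w) := by
    intro w hw ζ
    simp only [φ, dif_pos hw]
    rfl
  have hφc : ContinuousOn φ (ball w₀ r) := by
    rw [continuousOn_iff_continuous_domRestrict]
    -- compactness of the circle makes the curried function continuous for the sup norm
    convert ψ.curry.continuous using 1
    ext w ζ
    simp only [Set.domRestrict_apply, φ, dif_pos w.2]
  have hφa : AnalyticAt ℂ φ w₀ := by
    refine hG _ (ball w₀ r) φ isOpen_ball hφc ?_ w₀ (mem_ball_self hr)
    intro w hw v
    have hO : IsOpen {z : ℂ | w + z • v ∈ ball w₀ r} := isOpen_ball.preimage (by fun_prop)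
    refine differentiableAt_of_eval hO (hφc.comp (by fun_prop) fun z hz => hz) ?_ (by simpa using hw)
    intro ζ z hz
    refine DifferentiableAt.differentiableWithinAt ?_
    have h1 := hd ((ζ : ℂ), w + z • v) (hmem _ (sphere_subset_closedBall ζ.2) _ hz) (0, v)
    have h2 : DifferentiableAt ℂ (fun s : ℂ => f (ζ, w + s • v)) z := by
      have h1' : DifferentiableAt ℂ
        (fun s : ℂ => f (((ζ : ℂ), w + z • v) + s • ((0 : ℂ), v))) (z - z) := by simpa using h1
      have := DifferentiableAt.comp (f := fun s : ℂ => s - z) z h1' (by fun_prop)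
      refine this.congr_of_eventuallyEq (Filter.Eventually.of_forall fun s => ?_)
      simp only [Function.comp, Prod.smul_mk, smul_zero, Prod.mk_add_mk, add_zero]
      congr 2
      rw [add_assoc, ← add_smul]; congr 2; ring
    refine h2.congr_of_eventuallyEq ?_
    filter_upwards [hO.mem_nhds hz] with s hs using hφ _ hs ζ
  let ι : C(sphere z₀ r, ℂ) := ⟨fun ζ => ζ, continuous_subtype_val⟩
  let k : ℂ → C(sphere z₀ r, ℂ) := fun z => Ring.inverse (ι - algebraMap ℂ _ z)
  have hu : ∀ z ∈ ball z₀ r, IsUnit (ι - algebraMap ℂ _ z) := by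
    intro z hz
    rw [ContinuousMap.isUnit_iff_forall_ne_zero]
    rintro ⟨ζ, hζ⟩ h0
    have h0' : ζ - z = 0 := h0
    rw [sub_eq_zero] at h0'
    subst h0'
    simp only [mem_sphere, mem_ball] at hζ hz
    linarith
  have hk : AnalyticAt ℂ k z₀ := by
    have h1 : AnalyticAt ℂ (fun z : ℂ => ι - algebraMap ℂ C(sphere z₀ r, ℂ) z) z₀ :=
      analyticAt_const.sub ((Algebra.linearMap ℂ C(sphere z₀ r, ℂ)).toContinuousLinearMap.analyticAt z₀)
    obtain ⟨u, hu⟩ := hu z₀ (mem_ball_self hr)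
    have h2 := analyticAt_inverse (𝕜 := ℂ) u
    rw [hu] at h2
    exact AnalyticAt.fun_comp (f := fun z : ℂ => ι - algebraMap ℂ C(sphere z₀ r, ℂ) z) h2 h1
  have hkv : ∀ z ∈ ball z₀ r, ∀ ζ, k z ζ = ((ζ : ℂ) - z)⁻¹ := by
    intro z hz ζ
    have h1 := Ring.mul_inverse_cancel _ (hu z hz)
    have h2 := DFunLike.congr_fun h1 ζ
    exact eq_inv_of_mul_eq_one_right h2
  have hrep : ∀ z ∈ ball z₀ r, ∀ w ∈ ball w₀ r,
      (2 * ↑Real.pi * Complex.I)⁻¹ • circlePairing F z₀ hr.le (k z) (φ w) = f (z, w) := by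
    intro z hz w hw
    rw [circlePairing_apply z₀ hr.le (k z) (φ w) (fun ζ => (ζ - z)⁻¹ • f (ζ, w))
      (fun ζ => by rw [hkv z hz, hφ w hw])]
    have hdo : DifferentiableOn ℂ (fun ζ => f (ζ, w)) (closure (ball z₀ r)) := by
      intro ζ hζ
      refine DifferentiableAt.differentiableWithinAt ?_
      have h1 := hd (ζ, w) (hmem _ (closure_ball_subset_closedBall hζ) _ hw) (1, 0)
      have h1' : DifferentiableAt ℂ
        (fun s : ℂ => f ((ζ, w) + s • ((1 : ℂ), (0 : G)))) (ζ - ζ) := by simpa using h1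
      have := DifferentiableAt.comp (f := fun s : ℂ => s - ζ) ζ h1' (by fun_prop)
      refine this.congr_of_eventuallyEq (Filter.Eventually.of_forall fun s => ?_)
      simp [Function.comp]
    exact hdo.diffContOnCl.two_pi_i_inv_smul_circleIntegral_sub_inv_smul hz
  have hk' : AnalyticAt ℂ (fun p : ℂ × G => k p.1) (z₀, w₀) :=
    AnalyticAt.fun_comp (f := Prod.fst) hk analyticAt_fst
  have hφ' : AnalyticAt ℂ (fun p : ℂ × G => φ p.2) (z₀, w₀) :=
    AnalyticAt.fun_comp (f := Prod.snd) hφa analyticAt_snd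
  have hfin : AnalyticAt ℂ (fun p : ℂ × G => (2 * ↑Real.pi * Complex.I)⁻¹ •
      circlePairing F z₀ hr.le (k p.1) (φ p.2)) (z₀, w₀) :=
    analyticAt_const.smul (AnalyticAt.fun_comp (f := fun p : ℂ × G => (k p.1, φ p.2))
      ((circlePairing F z₀ hr.le).analyticAt_bilinear _) (AnalyticAt.prod hk' hφ'))
  refine hfin.congr ?_
  filter_upwards [prod_mem_nhds (ball_mem_nhds z₀ hr) (ball_mem_nhds w₀ hr)] with p hp
  exact hrep p.1 hp.1 p.2 hp.2

/-- Osgood's lemma. -/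
theorem osgoodProperty_of_finiteDimensional (G : Type) [NormedAddCommGroup G] [NormedSpace ℂ G]
    [FiniteDimensional ℂ G] : OsgoodProperty G := by
  have h : ∀ N : ℕ, OsgoodProperty (Fin N → ℂ) := by
    intro N
    induction N with
    | zero => exact osgoodProperty_of_subsingleton
    | succ N ih => exact ih.prod.of_equiv (Fin.consEquivL ℂ (fun _ => ℂ))
  exact (h (Module.finrank ℂ G)).of_equiv (ContinuousLinearEquiv.ofFinrankEq (by simp))

/-- Weierstrass' theorem in several variables, deduced from the one-variable theorem on complex
lines. -/
theorem analyticAt_of_tendstoUniformlyOn {G F : Type} [NormedAddCommGroup G] [NormedSpace ℂ G]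
    [FiniteDimensional ℂ G] [NormedAddCommGroup F] [NormedSpace ℂ F] [CompleteSpace F]
    {U : Set G} (hU : IsOpen U) {f : ℕ → G → F} {g : G → F}
    (hf : ∀ k, ∀ w ∈ U, AnalyticAt ℂ (f k) w)
    (hlim : TendstoUniformlyOn f g Filter.atTop U) {w : G} (hw : w ∈ U) :
    AnalyticAt ℂ g w := by
  refine osgoodProperty_of_finiteDimensional G F U g hU ?_ ?_ w hw
  · exact hlim.continuousOn (Filter.Frequently.of_forall fun k x hx =>
      (hf k x hx).continuousAt.continuousWithinAt)
  · intro x hx v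
    have hO : IsOpen {z : ℂ | x + z • v ∈ U} := hU.preimage (by fun_prop)
    have h1 : TendstoUniformlyOn (fun k (z : ℂ) => f k (x + z • v)) (fun z => g (x + z • v))
        Filter.atTop {z : ℂ | x + z • v ∈ U} := hlim.comp (fun z : ℂ => x + z • v)
    refine (h1.tendstoLocallyUniformlyOn.differentiableOn (Filter.Eventually.of_forall fun k z hz =>
      ?_) hO).differentiableAt (hO.mem_nhds (by simpa using hx))
    have h2 : DifferentiableAt ℂ (fun z : ℂ => x + z • v) z := by fun_prop
    exact (DifferentiableAt.comp z (hf k _ hz).differentiableAt h2).differentiableWithinAt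

/-! ### Homogeneous polynomials in `t` with analytic coefficients -/

open Asymptotics Topology in
theorem isBigO_norm_pow_of_le {m : ℕ} {q₀ : Fin m → ℂ} {j k : ℕ} (h : j ≤ k) :
    (fun p : (Fin m → ℂ) × (Fin m → ℂ) => ‖p.1‖ ^ k) =O[𝓝 (0, q₀)] fun p => ‖p.1‖ ^ j := by
  refine IsBigO.of_bound 1 ?_
  have h1 : ∀ᶠ p : (Fin m → ℂ) × (Fin m → ℂ) in 𝓝 (0, q₀), ‖p.1‖ < 1 := by
    have : ContinuousAt (fun p : (Fin m → ℂ) × (Fin m → ℂ) => ‖p.1‖) (0, q₀) := by fun_prop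
    exact this.eventually_lt_const (by simp)
  filter_upwards [h1] with p hp
  rw [one_mul, norm_pow, norm_pow, norm_norm]
  exact pow_le_pow_of_le_one (norm_nonneg _) hp.le h

/-- `HomogFamily q₀ k f`: the function `f (t, q)` is a homogeneous polynomial of degree `k` in `t`
whose coefficients are functions of `q` analytic at `q₀`. Such functions are generated from the
coefficients by sums and multiplications by coordinates of `t`. -/
inductive HomogFamily {m : ℕ} {F : Type} [NormedAddCommGroup F] [NormedSpace ℂ F]
    (q₀ : Fin m → ℂ) : ℕ → ((Fin m → ℂ) × (Fin m → ℂ) → F) → Prop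
  | const (a : (Fin m → ℂ) → F) (ha : AnalyticAt ℂ a q₀) : HomogFamily q₀ 0 (fun p => a p.2)
  | zero (k : ℕ) : HomogFamily q₀ k (fun _ => 0)
  | add {k : ℕ} {f g : (Fin m → ℂ) × (Fin m → ℂ) → F} (hf : HomogFamily q₀ k f)
      (hg : HomogFamily q₀ k g) : HomogFamily q₀ k (fun p => f p + g p)
  | coord {k : ℕ} {f : (Fin m → ℂ) × (Fin m → ℂ) → F} (i : Fin m) (hf : HomogFamily q₀ k f) :
      HomogFamily q₀ (k + 1) (fun p => p.1 i • f p)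

namespace HomogFamily

variable {m : ℕ} {F : Type} [NormedAddCommGroup F] [NormedSpace ℂ F] {q₀ : Fin m → ℂ} {k : ℕ}
  {f : (Fin m → ℂ) × (Fin m → ℂ) → F}

theorem analyticAt_coord (i : Fin m) (x : (Fin m → ℂ) × (Fin m → ℂ)) :
    AnalyticAt ℂ (fun p : (Fin m → ℂ) × (Fin m → ℂ) => p.1 i) x :=
  ((ContinuousLinearMap.proj (R := ℂ) (φ := fun _ : Fin m => ℂ) i).comp
    (ContinuousLinearMap.fst ℂ (Fin m → ℂ) (Fin m → ℂ))).analyticAt x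

theorem analyticAt (hf : HomogFamily q₀ k f) : AnalyticAt ℂ f (0, q₀) := by
  induction hf with
  | const a ha => exact AnalyticAt.fun_comp (f := Prod.snd) ha analyticAt_snd
  | zero k => exact analyticAt_const
  | add _ _ ihf ihg => exact ihf.add ihg
  | coord i _ ih => exact (analyticAt_coord i _).smul ih

theorem apply_smul (hf : HomogFamily q₀ k f) (s : ℂ) (t q : Fin m → ℂ) :
    f (s • t, q) = s ^ k • f (t, q) := by
  induction hf with
  | const a ha => simp
  | zero k => simp
  | add _ _ ihf ihg => simp only [ihf, ihg, smul_add]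
  | coord i _ ih =>
    simp only [ih, Pi.smul_apply, smul_smul, smul_eq_mul]
    congr 1; ring

theorem const_smul (hf : HomogFamily q₀ k f) (c : ℂ) : HomogFamily q₀ k (fun p => c • f p) := by
  induction hf with
  | const a ha => exact .const (fun q => c • a q) (analyticAt_const.smul ha)
  | zero k => simpa using HomogFamily.zero k
  | add _ _ ihf ihg => simpa only [smul_add] using ihf.add ihg
  | coord i _ ih => simpa only [smul_comm c] using ih.coord i

theorem sum {ι : Type} (s : Finset ι) {g : ι → (Fin m → ℂ) × (Fin m → ℂ) → F}
    (hg : ∀ i, HomogFamily q₀ k (g i)) : HomogFamily q₀ k (fun p => ∑ i ∈ s, g i p) := by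
  classical
  induction s using Finset.induction_on with
  | empty => simpa using HomogFamily.zero k
  | insert a s ha ih => simpa only [Finset.sum_insert ha] using (hg a).add ih

open Asymptotics Topology in
theorem isBigO (hf : HomogFamily q₀ k f) : f =O[𝓝 (0, q₀)] fun p => ‖p.1‖ ^ k := by
  induction hf with
  | const a ha =>
    have h : ContinuousAt (fun p : (Fin m → ℂ) × (Fin m → ℂ) => a p.2) (0, q₀) :=
      ContinuousAt.comp (f := Prod.snd) ha.continuousAt continuousAt_snd
    simpa using h.isBigO_one (F := ℝ)
  | zero k => exact isBigO_zero _ _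
  | add _ _ ihf ihg => exact ihf.add ihg
  | coord i _ ih =>
    have h : (fun p : (Fin m → ℂ) × (Fin m → ℂ) => p.1 i) =O[𝓝 (0, q₀)] fun p => ‖p.1‖ :=
      IsBigO.of_bound 1 (Filter.Eventually.of_forall fun p => by
        simpa using norm_le_pi_norm p.1 i)
    simpa only [pow_succ', smul_eq_mul] using h.smul ih

open Topology in
/-- The linearized equation is solvable, without loss, among homogeneous polynomials in `t`. For
the induction the equation carries a monomial `q ^ α`: replacing `h` by `t i • h` replaces `q ^ α` by
`q ^ α * q i`, and at degree `0` what remains is to invert `q ^ α - L q` for an exponent that is no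
longer zero. -/
theorem exists_solution [CompleteSpace F] {L : (Fin m → ℂ) → (F →L[ℂ] F)} (hL : AnalyticAt ℂ L q₀)
    (hu : ∀ α : Fin m → ℕ, α ≠ 0 → IsUnit ((∏ i, q₀ i ^ α i) • (1 : F →L[ℂ] F) - L q₀))
    (hf : HomogFamily q₀ k f) (α : Fin m → ℕ) (hα : 0 < k ∨ α ≠ 0) :
    ∃ h : (Fin m → ℂ) × (Fin m → ℂ) → F, HomogFamily q₀ k h ∧ ∀ᶠ q in 𝓝 q₀, ∀ t,
      (∏ i, q i ^ α i) • h (q * t, q) - L q (h (t, q)) = f (t, q) := by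
  induction hf generalizing α with
  | const a ha =>
    have hα' : α ≠ 0 := by simpa using hα
    have hM : AnalyticAt ℂ (fun q : Fin m → ℂ => (∏ i, q i ^ α i) • (1 : F →L[ℂ] F) - L q) q₀ := by
      refine AnalyticAt.fun_sub (AnalyticAt.fun_smul ?_ analyticAt_const) hL
      refine Finset.analyticAt_fun_prod _ fun i _ => AnalyticAt.pow ?_ _
      exact (ContinuousLinearMap.proj (R := ℂ) (φ := fun _ : Fin m => ℂ) i).analyticAt q₀
    have hinv : AnalyticAt ℂ (fun q : Fin m → ℂ =>
        Ring.inverse ((∏ i, q i ^ α i) • (1 : F →L[ℂ] F) - L q)) q₀ := by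
      obtain ⟨u, hu⟩ := hu α hα'
      have h2 := analyticAt_inverse (𝕜 := ℂ) u
      rw [hu] at h2
      exact AnalyticAt.fun_comp (f := fun q : Fin m → ℂ => (∏ i, q i ^ α i) • (1 : F →L[ℂ] F) - L q)
        h2 hM
    refine ⟨_, .const (fun q => Ring.inverse ((∏ i, q i ^ α i) • (1 : F →L[ℂ] F) - L q) (a q))
      ?_, ?_⟩
    · exact AnalyticAt.fun_comp
        (f := fun q => (Ring.inverse ((∏ i, q i ^ α i) • (1 : F →L[ℂ] F) - L q), a q))
        ((ContinuousLinearMap.id ℂ (F →L[ℂ] F)).analyticAt_bilinear _) (AnalyticAt.prod hinv ha)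
    · have hev : ∀ᶠ q in 𝓝 q₀, IsUnit ((∏ i, q i ^ α i) • (1 : F →L[ℂ] F) - L q) :=
        hM.continuousAt.eventually (Units.isOpen.mem_nhds (hu α hα'))
      filter_upwards [hev] with q hq t
      have h1 := DFunLike.congr_fun (Ring.mul_inverse_cancel _ hq) (a q)
      simpa using h1
  | zero k => exact ⟨_, .zero k, by simp⟩
  | add _ _ ihf ihg =>
    obtain ⟨h₁, hh₁, he₁⟩ := ihf α hα
    obtain ⟨h₂, hh₂, he₂⟩ := ihg α hα
    refine ⟨_, hh₁.add hh₂, ?_⟩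
    filter_upwards [he₁, he₂] with q h1 h2 t
    rw [← h1, ← h2, smul_add, map_add]
    abel
  | coord i _ ih =>
    classical
    obtain ⟨h, hh, he⟩ := ih (α + Pi.single i 1) (Or.inr fun h0 => by
      have := congrFun h0 i
      simp at this)
    refine ⟨_, hh.coord i, ?_⟩
    filter_upwards [he] with q h1 t
    have h2 : ∏ j, q j ^ (α + Pi.single i 1 : Fin m → ℕ) j = (∏ j, q j ^ α j) * q i := by
      simp only [Pi.add_apply, pow_add, Finset.prod_mul_distrib]
      congr 1
      rw [Finset.prod_eq_single i] <;> simp +contextual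
    rw [← h1, h2, smul_sub, map_smul, smul_smul, smul_smul]
    congr 2
    simp only [Pi.mul_apply]; ring

end HomogFamily

open Asymptotics Topology Metric in
/-- A `t`-derivative loses one order of vanishing at `t = 0`, by the Cauchy estimate on a disc of
radius `‖t‖`. -/
theorem isBigO_fderiv_coord {m : ℕ} {F : Type} [NormedAddCommGroup F] [NormedSpace ℂ F]
    [CompleteSpace F] {q₀ : Fin m → ℂ} {k : ℕ} {f : (Fin m → ℂ) × (Fin m → ℂ) → F}
    (hf : AnalyticAt ℂ f (0, q₀)) (hO : f =O[𝓝 (0, q₀)] fun p => ‖p.1‖ ^ (k + 1)) (i : Fin m) :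
    (fun p => fderiv ℂ f p (Pi.single i 1, 0)) =O[𝓝 (0, q₀)] fun p => ‖p.1‖ ^ k := by
  obtain ⟨C, hC, hb⟩ := isBigO_iff'.1 hO
  obtain ⟨ε, hε, hball⟩ := Metric.eventually_nhds_iff_ball.1 (hb.and hf.eventually_analyticAt)
  refine IsBigO.of_bound (C * 2 ^ (k + 1)) ?_
  filter_upwards [ball_mem_nhds (((0 : Fin m → ℂ), q₀)) (half_pos hε)] with p hp
  obtain ⟨t, q⟩ := p
  have hp' := hp
  rw [← ball_prod_same, Set.mem_prod, mem_ball_zero_iff, mem_ball] at hp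
  have he : ‖(Pi.single i 1 : Fin m → ℂ)‖ = 1 := by rw [Pi.norm_single, norm_one]
  have hcauchy : ∀ δ : ℝ, 0 < δ → δ < ε / 2 →
      ‖fderiv ℂ f (t, q) (Pi.single i 1, 0)‖ ≤ C * (‖t‖ + δ) ^ (k + 1) / δ := by
    intro δ hδ hδε
    have hn : ∀ s : ℂ, s ∈ closedBall (0 : ℂ) δ → ‖t + s • (Pi.single i 1 : Fin m → ℂ)‖ ≤ ‖t‖ + δ := by
      intro s hs
      rw [mem_closedBall_zero_iff] at hs
      refine (norm_add_le _ _).trans ?_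
      rw [norm_smul, he, mul_one]
      gcongr
    have hmem : ∀ s : ℂ, s ∈ closedBall (0 : ℂ) δ →
        (t + s • (Pi.single i 1 : Fin m → ℂ), q) ∈ ball ((0 : Fin m → ℂ), q₀) ε := by
      intro s hs
      rw [← ball_prod_same, Set.mem_prod, mem_ball_zero_iff, mem_ball]
      exact ⟨(hn s hs).trans_lt (by linarith), by linarith⟩
    have hder : ∀ s : ℂ, s ∈ closedBall (0 : ℂ) δ →
        HasDerivAt (fun s : ℂ => f (t + s • (Pi.single i 1 : Fin m → ℂ), q))
        (fderiv ℂ f (t + s • (Pi.single i 1 : Fin m → ℂ), q) (Pi.single i 1, 0)) s := by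
      intro s hs
      have h1 : HasDerivAt (fun s : ℂ => (t + s • (Pi.single i 1 : Fin m → ℂ), q))
          ((Pi.single i 1 : Fin m → ℂ), (0 : Fin m → ℂ)) s := by
        have h2 : HasDerivAt (fun s : ℂ => t + s • (Pi.single i 1 : Fin m → ℂ)) (Pi.single i 1) s := by
          simpa using ((hasDerivAt_id s).smul_const (Pi.single i 1 : Fin m → ℂ)).const_add t
        exact h2.prodMk (hasDerivAt_const s q)
      exact (hball _ (hmem s hs)).2.differentiableAt.hasFDerivAt.comp_hasDerivAt s h1
    have h3 := Complex.norm_deriv_le_of_forall_mem_sphere_norm_le (c := 0) (R := δ)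
      (C := C * (‖t‖ + δ) ^ (k + 1))
      (f := fun s : ℂ => f (t + s • (Pi.single i 1 : Fin m → ℂ), q)) hδ ?_ ?_
    · rw [(hder 0 (by simp [hδ.le])).deriv] at h3
      simpa using h3
    · refine DifferentiableOn.diffContOnCl fun s hs => ?_
      exact (hder s (closure_ball_subset_closedBall hs)).differentiableAt.differentiableWithinAt
    · intro s hs
      refine (hball _ (hmem s (sphere_subset_closedBall hs))).1.trans ?_
      rw [norm_pow, norm_norm]
      gcongr
      exact hn s (sphere_subset_closedBall hs)
  rw [norm_pow, norm_norm]
  simp only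
  rcases eq_or_ne t 0 with rfl | ht
  -- at `t = 0` no disc of radius `‖t‖` is available, and the radius tends to `0` instead
  · have hlim : Filter.Tendsto (fun δ : ℝ => C * δ ^ k) (𝓝[>] 0) (𝓝 (C * (0 : ℝ) ^ k)) := by
      have : Continuous (fun δ : ℝ => C * δ ^ k) := by fun_prop
      exact this.continuousWithinAt
    have h4 := ge_of_tendsto hlim (b := ‖fderiv ℂ f (0, q) (Pi.single i 1, 0)‖) (by
      filter_upwards [Ioo_mem_nhdsGT (half_pos hε)] with δ hδ
      refine (hcauchy δ hδ.1 hδ.2).trans (le_of_eq ?_)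
      have := hδ.1.ne'
      rw [norm_zero, zero_add, pow_succ]
      field_simp)
    rw [norm_zero]
    refine h4.trans ?_
    have : (1 : ℝ) ≤ 2 ^ (k + 1) := one_le_pow₀ (by norm_num)
    have h0 : (0 : ℝ) ≤ C * 0 ^ k := by positivity
    nlinarith
  · have ht' : 0 < ‖t‖ := norm_pos_iff.2 ht
    refine (hcauchy ‖t‖ ht' hp.1).trans (le_of_eq ?_)
    rw [← two_mul, mul_pow, pow_succ ‖t‖]
    field_simp

open Asymptotics Topology Metric in
/-- The leading Taylor term in `t`, with analytic dependence on `q`. By induction on `k`: if `g i` is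
the leading term of `∂f / ∂t_i`, Euler's identity suggests `(k + 1)⁻¹ ∑ t i • g i` for `f`, and the
mean value inequality on the segment from `(0, q)` to `(t, q)` bounds the remainder. -/
theorem exists_homogFamily {m : ℕ} {F : Type} [NormedAddCommGroup F] [NormedSpace ℂ F]
    [CompleteSpace F] {q₀ : Fin m → ℂ} (k : ℕ) {f : (Fin m → ℂ) × (Fin m → ℂ) → F}
    (hf : AnalyticAt ℂ f (0, q₀)) (hO : f =O[𝓝 (0, q₀)] fun p => ‖p.1‖ ^ k) :
    ∃ g : (Fin m → ℂ) × (Fin m → ℂ) → F, HomogFamily q₀ k g ∧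
      (fun p => f p - g p) =O[𝓝 (0, q₀)] fun p => ‖p.1‖ ^ (k + 1) := by
  induction k generalizing f with
  | zero =>
    have ha : AnalyticAt ℂ (fun q : Fin m → ℂ => f (0, q)) q₀ :=
      AnalyticAt.fun_comp (f := fun q : Fin m → ℂ => ((0 : Fin m → ℂ), q)) hf
        (analyticAt_const.prod analyticAt_id)
    refine ⟨_, .const _ ha, ?_⟩
    have hlip := hf.hasStrictFDerivAt.isBigO_sub
    have hc : Filter.Tendsto (fun p : (Fin m → ℂ) × (Fin m → ℂ) => (p, ((0 : Fin m → ℂ), p.2)))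
        (𝓝 (0, q₀)) (𝓝 ((0, q₀), (0, q₀))) := by
      have : Continuous (fun p : (Fin m → ℂ) × (Fin m → ℂ) => (p, ((0 : Fin m → ℂ), p.2))) := by
        fun_prop
      exact this.tendsto' _ _ rfl
    have h1 := hlip.comp_tendsto hc
    refine h1.trans (IsBigO.of_bound 1 (Filter.Eventually.of_forall fun p => ?_))
    simp [Prod.norm_def]
  | succ k ih =>
    have hd : ∀ i : Fin m, AnalyticAt ℂ (fun p => fderiv ℂ f p (Pi.single i 1, 0)) (0, q₀) := by
      intro i
      exact AnalyticAt.fun_comp (f := fun p => fderiv ℂ f p)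
        (g := fun A : ((Fin m → ℂ) × (Fin m → ℂ)) →L[ℂ] F => A (Pi.single i 1, 0))
        ((ContinuousLinearMap.apply ℂ F
          ((Pi.single i 1, 0) : (Fin m → ℂ) × (Fin m → ℂ))).analyticAt _) hf.fderiv
    choose g hg hgO using fun i => ih (hd i) (isBigO_fderiv_coord hf hO i)
    have hP : HomogFamily q₀ (k + 1)
        (fun p => ((k : ℂ) + 1)⁻¹ • ∑ i, p.1 i • g i p) :=
      (HomogFamily.sum _ fun i => (hg i).coord i).const_smul _
    refine ⟨_, hP, ?_⟩
    obtain ⟨C₀, hC₀, hb₀⟩ := isBigO_iff'.1 hO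
    choose C hC hb using fun i => isBigO_iff'.1 (hgO i)
    obtain ⟨ε, hε, hball⟩ := Metric.eventually_nhds_iff_ball.1
      ((hb₀.and hf.eventually_analyticAt).and (Filter.eventually_all.2 hb))
    refine IsBigO.of_bound (∑ i, C i) ?_
    filter_upwards [ball_mem_nhds (((0 : Fin m → ℂ), q₀)) hε] with p hp
    obtain ⟨t, q⟩ := p
    have hmem : ∀ s : ℝ, s ∈ Set.Icc (0 : ℝ) 1 → ((s : ℂ) • t, q) ∈ ball ((0 : Fin m → ℂ), q₀) ε := by
      intro s hs
      rw [← ball_prod_same, Set.mem_prod, mem_ball_zero_iff, mem_ball] at hp ⊢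
      refine ⟨?_, hp.2⟩
      rw [norm_smul, Complex.norm_real, Real.norm_of_nonneg hs.1]
      exact (mul_le_of_le_one_left (norm_nonneg _) hs.2).trans_lt hp.1
    have hf0 : f (0, q) = 0 := by
      have := (hball _ (hmem 0 (by simp))).1.1
      simpa using this
    have hmv := norm_image_sub_le_of_norm_deriv_le_segment_01'
      (f := fun s : ℝ => f ((s : ℂ) • t, q) -
        (s : ℂ) ^ (k + 1) • (((k : ℂ) + 1)⁻¹ • ∑ i, t i • g i (t, q)))
      (f' := fun s : ℝ => ∑ i, t i • (fderiv ℂ f ((s : ℂ) • t, q) (Pi.single i 1, 0) -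
        g i ((s : ℂ) • t, q)))
      (C := (∑ i, C i) * ‖t‖ ^ (k + 1 + 1)) ?_ ?_
    · simpa [hf0] using hmv
    · intro s hs
      refine HasDerivAt.hasDerivWithinAt ?_
      suffices hC : HasDerivAt (fun s : ℂ => f (s • t, q) -
          s ^ (k + 1) • (((k : ℂ) + 1)⁻¹ • ∑ i, t i • g i (t, q)))
          (∑ i, t i • (fderiv ℂ f ((s : ℂ) • t, q) (Pi.single i 1, 0) - g i ((s : ℂ) • t, q)))
          (s : ℂ) by
        simpa [Function.comp_def] using hC.scomp s (Complex.ofRealCLM.hasDerivAt (x := s))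
      have h1 : HasDerivAt (fun s : ℂ => (s • t, q)) (t, (0 : Fin m → ℂ)) (s : ℂ) := by
        have h2 : HasDerivAt (fun s : ℂ => s • t) t (s : ℂ) := by
          simpa using (hasDerivAt_id (s : ℂ)).smul_const t
        exact h2.prodMk (hasDerivAt_const _ q)
      have h3 := (hball _ (hmem s hs)).1.2.differentiableAt.hasFDerivAt.comp_hasDerivAt (s : ℂ) h1
      have h4 := h3.sub ((hasDerivAt_pow (k + 1) (s : ℂ)).smul_const
        (((k : ℂ) + 1)⁻¹ • ∑ i, t i • g i (t, q)))
      have h6 : HasDerivAt (fun s : ℂ => f (s • t, q) -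
          s ^ (k + 1) • (((k : ℂ) + 1)⁻¹ • ∑ i, t i • g i (t, q))) _ (s : ℂ) := h4
      convert h6 using 1
      have h5 : ((t, 0) : (Fin m → ℂ) × (Fin m → ℂ)) =
          ∑ i, t i • ((Pi.single i 1 : Fin m → ℂ), (0 : Fin m → ℂ)) := by
        ext j
        · simp [Prod.fst_sum, Finset.sum_apply, Pi.single_apply]
        · simp [Prod.snd_sum]
      rw [h5, map_sum]
      have hk : (k : ℂ) + 1 ≠ 0 := by exact_mod_cast k.succ_ne_zero
      simp only [smul_sub, Finset.sum_sub_distrib, map_smul, (hg _).apply_smul, smul_smul,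
        Finset.smul_sum]
      congr 1
      refine Finset.sum_congr rfl fun i _ => ?_
      congr 1
      rw [Nat.add_sub_cancel]
      push_cast
      field_simp
    · intro s hs
      have hs' : s ∈ Set.Icc (0 : ℝ) 1 := ⟨hs.1, hs.2.le⟩
      rw [Finset.sum_mul]
      refine (norm_sum_le _ _).trans (Finset.sum_le_sum fun i _ => ?_)
      rw [norm_smul]
      have h1 := (hball _ (hmem s hs')).2 i
      simp only [norm_pow, norm_norm] at h1
      have h2 : ‖(s : ℂ) • t‖ ≤ ‖t‖ := by
        rw [norm_smul, Complex.norm_real, Real.norm_of_nonneg hs.1]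
        exact mul_le_of_le_one_left (norm_nonneg _) hs.2.le
      calc _ ≤ ‖t‖ * (C i * ‖t‖ ^ (k + 1)) := by
            refine mul_le_mul (norm_le_pi_norm t i) (h1.trans ?_) (norm_nonneg _) (norm_nonneg _)
            have := hC i
            gcongr
        _ = C i * ‖t‖ ^ (k + 1 + 1) := by ring

/-! ### Approximate solutions and their correction -/

/-- The defect `P (q * t, q) - H (t, P (t, q), q)` of an approximate solution `P`, at
`p = (t, q)`. -/
def qResidual {m : ℕ} {F : Type} [AddGroup F] (H : (Fin m → ℂ) × F × (Fin m → ℂ) → F)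
    (P : (Fin m → ℂ) × (Fin m → ℂ) → F) (p : (Fin m → ℂ) × (Fin m → ℂ)) : F :=
  P (p.2 * p.1, p.2) - H (p.1, P p, p.2)

/-- The partial derivative of `H (t, y, q)` with respect to `y`, at `(0, 0, q)`. -/
noncomputable def linearPart {m : ℕ} {F : Type} [NormedAddCommGroup F] [NormedSpace ℂ F]
    (H : (Fin m → ℂ) × F × (Fin m → ℂ) → F) (q : Fin m → ℂ) : F →L[ℂ] F :=
  (fderiv ℂ H (0, 0, q)).comp
    ((ContinuousLinearMap.inr ℂ (Fin m → ℂ) (F × (Fin m → ℂ))).comp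
      (ContinuousLinearMap.inl ℂ F (Fin m → ℂ)))

theorem analyticAt_qResidual {m : ℕ} {F : Type} [NormedAddCommGroup F] [NormedSpace ℂ F]
    {H : (Fin m → ℂ) × F × (Fin m → ℂ) → F} {P : (Fin m → ℂ) × (Fin m → ℂ) → F}
    {p : (Fin m → ℂ) × (Fin m → ℂ)}
    (hP : AnalyticAt ℂ P p) (hP' : AnalyticAt ℂ P (p.2 * p.1, p.2))
    (hH : AnalyticAt ℂ H (p.1, P p, p.2)) : AnalyticAt ℂ (qResidual H P) p := by
  have h1 : AnalyticAt ℂ (fun p : (Fin m → ℂ) × (Fin m → ℂ) => (p.2 * p.1, p.2)) p :=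
    (analyticAt_snd.mul analyticAt_fst).prod analyticAt_snd
  have h2 : AnalyticAt ℂ (fun p : (Fin m → ℂ) × (Fin m → ℂ) => (p.1, P p, p.2)) p :=
    analyticAt_fst.prod (hP.prod analyticAt_snd)
  exact (AnalyticAt.fun_comp (f := fun p : (Fin m → ℂ) × (Fin m → ℂ) => (p.2 * p.1, p.2)) hP' h1).sub
    (AnalyticAt.fun_comp (f := fun p : (Fin m → ℂ) × (Fin m → ℂ) => (p.1, P p, p.2)) hH h2)

section

variable {m : ℕ} {F : Type} [NormedAddCommGroup F] [NormedSpace ℂ F] [CompleteSpace F]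
  {H : (Fin m → ℂ) × F × (Fin m → ℂ) → F} {q₀ : Fin m → ℂ}

theorem analyticAt_linearPart (hH : AnalyticAt ℂ H (0, 0, q₀)) :
    AnalyticAt ℂ (linearPart H) q₀ := by
  have h1 : AnalyticAt ℂ (fun q : Fin m → ℂ => fderiv ℂ H (0, 0, q)) q₀ :=
    AnalyticAt.fun_comp (f := fun q : Fin m → ℂ => ((0 : Fin m → ℂ), (0 : F), q)) hH.fderiv
      (analyticAt_const.prod (analyticAt_const.prod analyticAt_id))
  let B := (ContinuousLinearMap.compL ℂ F ((Fin m → ℂ) × F × (Fin m → ℂ)) F).flip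
    ((ContinuousLinearMap.inr ℂ (Fin m → ℂ) (F × (Fin m → ℂ))).comp
      (ContinuousLinearMap.inl ℂ F (Fin m → ℂ)))
  exact AnalyticAt.fun_comp (g := B) (f := fun q : Fin m → ℂ => fderiv ℂ H (0, 0, q))
    (B.analyticAt _) h1

open Asymptotics Topology Metric in
/-- First-order expansion of `H` in `y`, uniformly in `(t, q)`: the remainder is controlled because
the derivative of `H` is Lipschitz near `(0, 0, q₀)`. Only points at distance at most
`‖t‖ + ‖y‖ + ‖y'‖` from `(0, 0, q)` matter, whence the first factor; the expansion is about
`(0, 0, q)` rather than `(0, 0, q₀)` so that this factor does not involve `q - q₀`. -/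
theorem exists_linearPart_bound (hH : AnalyticAt ℂ H (0, 0, q₀)) :
    ∃ C > 0, ∃ ε > 0, ∀ (t q : Fin m → ℂ) (y y' : F), ‖t‖ < ε → ‖q - q₀‖ < ε → ‖y‖ < ε →
      ‖y'‖ < ε → ‖H (t, y', q) - H (t, y, q) - linearPart H q (y' - y)‖ ≤
        C * (‖t‖ + ‖y‖ + ‖y'‖) * ‖y' - y‖ := by
  obtain ⟨C, hC, hb⟩ := isBigO_iff'.1 hH.fderiv.hasStrictFDerivAt.isBigO_sub
  have hb' := hb.and (continuousAt_fst.eventually hH.eventually_analyticAt)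
  obtain ⟨ε, hε, hball⟩ := Metric.eventually_nhds_iff_ball.1 hb'
  refine ⟨C, hC, ε, hε, ?_⟩
  intro t q y y' ht hq hy hy'
  have hmem : ∀ v : F, ‖v‖ < ε → (t, v, q) ∈ ball ((0 : Fin m → ℂ), (0 : F), q₀) ε := by
    intro v hv
    rw [← ball_prod_same, ← ball_prod_same]
    exact ⟨by simpa using ht, by simpa using hv, by simpa [dist_eq_norm] using hq⟩
  have h0 : ((0 : Fin m → ℂ), (0 : F), q) ∈ ball ((0 : Fin m → ℂ), (0 : F), q₀) ε := by
    rw [← ball_prod_same, ← ball_prod_same]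
    exact ⟨by simpa using hε, by simpa using hε, by simpa [dist_eq_norm] using hq⟩
  let S := ball ((0 : Fin m → ℂ), (0 : F), q₀) ε ∩
    closedBall ((0 : Fin m → ℂ), (0 : F), q) (‖t‖ + ‖y‖ + ‖y'‖)
  have hpair : ∀ x ∈ S, ‖fderiv ℂ H x - fderiv ℂ H (0, 0, q)‖ ≤ C * (‖t‖ + ‖y‖ + ‖y'‖) ∧
      AnalyticAt ℂ H x := by
    intro x hx
    have h1 := hball (x, (0, 0, q)) (by rw [← ball_prod_same]; exact ⟨hx.1, h0⟩)
    refine ⟨h1.1.trans ?_, h1.2⟩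
    have h2 := hx.2
    rw [mem_closedBall, dist_eq_norm] at h2
    gcongr
  have hS : ∀ v : F, ‖v‖ < ε → ‖v‖ ≤ ‖y‖ + ‖y'‖ → (t, v, q) ∈ S := by
    intro v hv hv'
    refine ⟨hmem v hv, ?_⟩
    rw [mem_closedBall, dist_eq_norm]
    simp only [Prod.mk_sub_mk, sub_zero, sub_self, Prod.norm_mk, norm_zero]
    refine max_le ?_ (max_le ?_ ?_)
    · linarith [norm_nonneg y, norm_nonneg y']
    · linarith [norm_nonneg t]
    · positivity
  have h := Convex.norm_image_sub_le_of_norm_hasFDerivWithin_le' (𝕜 := ℂ) (f := H) (s := S)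
    (f' := fderiv ℂ H) (φ := fderiv ℂ H (0, 0, q)) (C := C * (‖t‖ + ‖y‖ + ‖y'‖))
    (x := (t, y, q)) (y := (t, y', q))
    (fun x hx => (hpair x hx).2.differentiableAt.hasFDerivAt.hasFDerivWithinAt)
    (fun x hx => (hpair x hx).1) ((convex_ball _ _).inter (convex_closedBall _ _))
    (hS y hy (by linarith [norm_nonneg y'])) (hS y' hy' (by linarith [norm_nonneg y]))
  have h3 : ((t, y', q) - (t, y, q) : (Fin m → ℂ) × F × (Fin m → ℂ)) = (0, y' - y, 0) := by simp
  rw [h3] at h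
  simpa [linearPart] using h

open Asymptotics Topology Metric in
/-- Approximate solutions to every order in `t`. Passing to the next order subtracts the leading
term of the residual, by solving the linearized equation; the error made by linearizing is quadratic
and hence of higher order. -/
theorem exists_approx (hH : AnalyticAt ℂ H (0, 0, q₀)) (hH0 : ∀ᶠ q in 𝓝 q₀, H (0, 0, q) = 0)
    (hu : ∀ α : Fin m → ℕ, α ≠ 0 →
      IsUnit ((∏ i, q₀ i ^ α i) • (1 : F →L[ℂ] F) - linearPart H q₀)) (k : ℕ) :
    ∃ P : (Fin m → ℂ) × (Fin m → ℂ) → F, AnalyticAt ℂ P (0, q₀) ∧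
      P =O[𝓝 (0, q₀)] (fun p => ‖p.1‖ ^ 1) ∧
      qResidual H P =O[𝓝 (0, q₀)] (fun p => ‖p.1‖ ^ (k + 1)) := by
  induction k with
  | zero =>
    refine ⟨fun _ => 0, analyticAt_const, isBigO_zero _ _, ?_⟩
    have hres : AnalyticAt ℂ (qResidual H fun _ => 0) (0, q₀) :=
      analyticAt_qResidual analyticAt_const analyticAt_const hH
    have hc : Filter.Tendsto (fun p : (Fin m → ℂ) × (Fin m → ℂ) => (p, ((0 : Fin m → ℂ), p.2)))
        (𝓝 (0, q₀)) (𝓝 ((0, q₀), (0, q₀))) := by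
      have : Continuous (fun p : (Fin m → ℂ) × (Fin m → ℂ) => (p, ((0 : Fin m → ℂ), p.2))) := by
        fun_prop
      exact this.tendsto' _ _ rfl
    have h1 := hres.hasStrictFDerivAt.isBigO_sub.comp_tendsto hc
    have h2 : ∀ᶠ p : (Fin m → ℂ) × (Fin m → ℂ) in 𝓝 (0, q₀), H (0, 0, p.2) = 0 :=
      (continuous_snd.tendsto' ((0 : Fin m → ℂ), q₀) q₀ rfl).eventually hH0
    refine IsBigO.congr' (h1.trans (IsBigO.of_bound 1 (Filter.Eventually.of_forall fun p => ?_)))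
      ?_ Filter.EventuallyEq.rfl
    · simp [Prod.norm_def]
    · filter_upwards [h2] with p hp
      simp [qResidual, hp]
  | succ k ih =>
    obtain ⟨P, hPa, hPO, hres⟩ := ih
    have hP0 : P (0, q₀) = 0 := by
      obtain ⟨c, hc⟩ := hPO.bound
      simpa using hc.self_of_nhds
    have hresa : AnalyticAt ℂ (qResidual H P) (0, q₀) := by
      refine analyticAt_qResidual hPa ?_ ?_
      · simpa using hPa
      · simpa [hP0] using hH
    obtain ⟨g, hg, hgO⟩ := exists_homogFamily (k + 1) hresa hres
    obtain ⟨h, hh, he⟩ := HomogFamily.exists_solution (analyticAt_linearPart hH) hu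
      (hg.const_smul (-1)) 0 (Or.inl k.succ_pos)
    have hhO1 : h =O[𝓝 (0, q₀)] fun p => ‖p.1‖ ^ 1 :=
      hh.isBigO.trans (isBigO_norm_pow_of_le (by omega))
    have hh0 : h (0, q₀) = 0 := by
      obtain ⟨c, hc⟩ := hhO1.bound
      simpa using hc.self_of_nhds
    refine ⟨fun p => P p + h p, hPa.add hh.analyticAt, hPO.add hhO1, ?_⟩
    obtain ⟨C, hC, ε, hε, hquad⟩ := exists_linearPart_bound hH
    let Q : (Fin m → ℂ) × (Fin m → ℂ) → F := fun p =>
      H (p.1, P p + h p, p.2) - H (p.1, P p, p.2) - linearPart H p.2 (h p)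
    have hQ : Q =O[𝓝 (0, q₀)] fun p => ‖p.1‖ ^ (k + 1 + 1) := by
      have h1 : Q =O[𝓝 (0, q₀)] fun p => (‖p.1‖ + ‖P p‖ + ‖P p + h p‖) * ‖h p‖ := by
        refine IsBigO.of_bound C ?_
        have e1 : ∀ᶠ p : (Fin m → ℂ) × (Fin m → ℂ) in 𝓝 (0, q₀), ‖p.1‖ < ε :=
          Filter.Tendsto.eventually_lt_const (by simpa using hε) (ContinuousAt.tendsto (by fun_prop))
        have e2 : ∀ᶠ p : (Fin m → ℂ) × (Fin m → ℂ) in 𝓝 (0, q₀), ‖p.2 - q₀‖ < ε :=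
          Filter.Tendsto.eventually_lt_const (by simpa using hε) (ContinuousAt.tendsto (by fun_prop))
        have e3 : ∀ᶠ p : (Fin m → ℂ) × (Fin m → ℂ) in 𝓝 (0, q₀), ‖P p‖ < ε :=
          Filter.Tendsto.eventually_lt_const (by simpa [hP0] using hε) (ContinuousAt.tendsto hPa.continuousAt.norm)
        have e4 : ∀ᶠ p : (Fin m → ℂ) × (Fin m → ℂ) in 𝓝 (0, q₀), ‖P p + h p‖ < ε :=
          Filter.Tendsto.eventually_lt_const (by simpa [hP0, hh0] using hε)
            (hPa.continuousAt.add hh.analyticAt.continuousAt).norm.tendsto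
        filter_upwards [e1, e2, e3, e4] with p h1 h2 h3 h4
        have := hquad p.1 p.2 (P p) (P p + h p) h1 h2 h3 h4
        rw [add_sub_cancel_left] at this
        rw [norm_mul, norm_norm, Real.norm_of_nonneg (by positivity), ← mul_assoc]
        exact this
      refine h1.trans ?_
      have h2 : (fun p => ‖p.1‖ + ‖P p‖ + ‖P p + h p‖) =O[𝓝 (0, q₀)] fun p => ‖p.1‖ ^ 1 := by
        refine IsBigO.add (IsBigO.add ?_ hPO.norm_left) (hPO.add hhO1).norm_left
        exact IsBigO.of_bound 1 (Filter.Eventually.of_forall fun p => by simp)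
      refine (h2.mul hh.isBigO.norm_left).congr_right fun p => ?_
      ring
    refine (hgO.sub hQ).congr' ?_ Filter.EventuallyEq.rfl
    filter_upwards [(continuous_snd.tendsto' ((0 : Fin m → ℂ), q₀) q₀ rfl).eventually he] with p hp
    have h5 := hp p.1
    simp only [Pi.zero_apply, pow_zero, Finset.prod_const_one, one_smul, neg_smul] at h5
    have h6 : g p = - (h (p.2 * p.1, p.2) - linearPart H p.2 (h p)) := by rw [h5, neg_neg]
    simp only [qResidual, Q, h6]
    abel

open Asymptotics Topology Metric in
/-- If `A` inverts the linear part at `q₀`, then `y ↦ y - A (H (t, y, q))` is a contraction near the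
origin, by strict differentiability of `H`. -/
theorem exists_contraction (hH : AnalyticAt ℂ H (0, 0, q₀)) (A : F →L[ℂ] F)
    (hA : A * linearPart H q₀ = 1) :
    ∃ ε > 0, ∀ (t q : Fin m → ℂ) (y y' : F), ‖t‖ < ε → ‖q - q₀‖ < ε → ‖y‖ < ε → ‖y'‖ < ε →
      AnalyticAt ℂ H (t, y, q) ∧
      ‖y' - y - A (H (t, y', q) - H (t, y, q))‖ ≤ 1 / 4 * ‖y' - y‖ := by
  have hc : (0 : ℝ) < 1 / (4 * (‖A‖ + 1)) := by positivity
  have hb := hH.hasStrictFDerivAt.isLittleO.def hc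
  obtain ⟨ε, hε, hball⟩ := Metric.eventually_nhds_iff_ball.1
    (hb.and (continuousAt_fst.eventually hH.eventually_analyticAt))
  refine ⟨ε, hε, fun t q y y' ht hq hy hy' => ?_⟩
  have hmem : ∀ v : F, ‖v‖ < ε → (t, v, q) ∈ ball ((0 : Fin m → ℂ), (0 : F), q₀) ε := by
    intro v hv
    rw [← ball_prod_same, ← ball_prod_same]
    exact ⟨by simpa using ht, by simpa using hv, by simpa [dist_eq_norm] using hq⟩
  refine ⟨(hball ((t, y, q), (t, y, q))
    (by rw [← ball_prod_same]; exact ⟨hmem y hy, hmem y hy⟩)).2, ?_⟩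
  have h := (hball ((t, y', q), (t, y, q))
    (by rw [← ball_prod_same]; exact ⟨hmem y' hy', hmem y hy⟩)).1
  simp only at h
  have h3 : ((t, y', q) - (t, y, q) : (Fin m → ℂ) × F × (Fin m → ℂ)) = (0, y' - y, 0) := by simp
  rw [h3] at h
  have h4 : ‖((0 : Fin m → ℂ), y' - y, (0 : Fin m → ℂ))‖ = ‖y' - y‖ := by
    simp [Prod.norm_mk]
  have h5 : fderiv ℂ H (0, 0, q₀) (0, y' - y, 0) = linearPart H q₀ (y' - y) := by
    simp [linearPart]
  rw [h4, h5] at h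
  have h6 : y' - y - A (H (t, y', q) - H (t, y, q)) =
      -A (H (t, y', q) - H (t, y, q) - linearPart H q₀ (y' - y)) := by
    have := DFunLike.congr_fun hA (y' - y)
    simp only [mul_apply_eq_comp, one_apply_eq_self] at this
    rw [map_sub A _ (linearPart H q₀ (y' - y)), this]
    abel
  rw [h6, norm_neg]
  calc _ ≤ ‖A‖ * (1 / (4 * (‖A‖ + 1)) * ‖y' - y‖) := (A.le_opNorm _).trans (by gcongr)
    _ = (‖A‖ / (‖A‖ + 1)) * (1 / 4 * ‖y' - y‖) := by field_simp
    _ ≤ 1 * (1 / 4 * ‖y' - y‖) := by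
        gcongr
        rw [div_le_one (by positivity)]
        linarith
    _ = _ := one_mul _

/-- The iterates of the correction step `Y ↦ Y + A (qResidual H Y)`, starting from `P`. -/
def correct (H : (Fin m → ℂ) × F × (Fin m → ℂ) → F) (A : F →L[ℂ] F)
    (P : (Fin m → ℂ) × (Fin m → ℂ) → F) : ℕ → (Fin m → ℂ) × (Fin m → ℂ) → F
  | 0 => P
  | k + 1 => fun p => correct H A P k p + A (qResidual H (correct H A P k) p)

open Asymptotics Topology Metric Filter in
/-- The theorem in coordinate-free form, with a Banach space of values and the spectral hypotheses
stated as invertibility at `q₀` alone. The solution is found on every sufficiently small pair of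
balls of equal radius. -/
theorem exists_solution (hq₀ : ‖q₀‖ < 1) (hH : AnalyticAt ℂ H (0, 0, q₀))
    (hH0 : ∀ᶠ q in 𝓝 q₀, H (0, 0, q) = 0)
    (hu0 : IsUnit (linearPart H q₀))
    (hu : ∀ α : Fin m → ℕ, α ≠ 0 →
      IsUnit ((∏ i, q₀ i ^ α i) • (1 : F →L[ℂ] F) - linearPart H q₀)) :
    ∃ δ > 0, ∀ ε > 0, ε ≤ δ → ∃ y : (Fin m → ℂ) × (Fin m → ℂ) → F,
      ∀ t ∈ ball (0 : Fin m → ℂ) ε, ∀ q ∈ ball q₀ ε, AnalyticAt ℂ y (t, q) ∧ y (0, q) = 0 ∧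
        y (q * t, q) = H (t, y (t, q), q) := by
  obtain ⟨u, hu0⟩ := hu0
  let A : F →L[ℂ] F := ↑u⁻¹
  have hA : A * linearPart H q₀ = 1 := by rw [← hu0]; exact u.inv_mul
  have hA' : ∀ v : F, A v = 0 → v = 0 := by
    intro v hv
    have h1 : (u : F →L[ℂ] F) * A = 1 := u.mul_inv
    have := DFunLike.congr_fun h1 v
    simpa [hv] using this.symm
  obtain ⟨r, hr1, hr2⟩ := exists_between hq₀
  have hr0 : 0 ≤ r := (norm_nonneg _).trans hr1.le
  -- the order of approximation has to beat the norm of `A`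
  obtain ⟨k, hk⟩ : ∃ k : ℕ, ‖A‖ * r ^ (k + 1) ≤ 1 / 4 := by
    have h1 : Tendsto (fun k : ℕ => ‖A‖ * r ^ (k + 1)) atTop (𝓝 (‖A‖ * 0)) :=
      ((tendsto_pow_atTop_nhds_zero_of_lt_one hr0 hr2).comp (tendsto_add_atTop_nat 1)).const_mul _
    rw [mul_zero] at h1
    exact (h1.eventually_le_const (by norm_num)).exists
  obtain ⟨P, hPa, hPO, hPres⟩ := exists_approx hH hH0 hu k
  obtain ⟨ρ, hρ, hcon⟩ := exists_contraction hH A hA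
  obtain ⟨C, hC, hCb⟩ := isBigO_iff'.1 hPO
  obtain ⟨K, hK, hKb⟩ := isBigO_iff'.1 hPres
  have hqr : ∀ᶠ p : (Fin m → ℂ) × (Fin m → ℂ) in 𝓝 (0, q₀), ‖p.2‖ < r :=
    Filter.Tendsto.eventually_lt_const (by simpa using hr1) (ContinuousAt.tendsto (by fun_prop))
  obtain ⟨δ₁, hδ₁, hball⟩ := Metric.eventually_nhds_iff_ball.1
    ((hPa.eventually_analyticAt.and hqr).and (hCb.and hKb))
  let a : ℝ := ‖A‖ * K
  have ha : 0 ≤ a := by positivity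
  have hden : 0 < C + 2 * a + 1 := by positivity
  -- the radius `ρ / (C + 2 * a + 1)` keeps all iterates, of size at most `(C + 2 * a) * ‖t‖`, inside
  -- the ball of radius `ρ` on which the contraction estimate holds
  refine ⟨min (min δ₁ 1) (min ρ (ρ / (C + 2 * a + 1))), by positivity, fun ε hε hεδ => ?_⟩
  have hε1 : ε ≤ δ₁ := hεδ.trans ((min_le_left _ _).trans (min_le_left _ _))
  have hε2 : ε ≤ 1 := hεδ.trans ((min_le_left _ _).trans (min_le_right _ _))
  have hε3 : ε ≤ ρ := hεδ.trans ((min_le_right _ _).trans (min_le_left _ _))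
  have hε4 : ε ≤ ρ / (C + 2 * a + 1) := hεδ.trans ((min_le_right _ _).trans (min_le_right _ _))
  let W : Set ((Fin m → ℂ) × (Fin m → ℂ)) := ball 0 ε ×ˢ ball q₀ ε
  have hWo : IsOpen W := isOpen_ball.prod isOpen_ball
  have hW : ∀ p ∈ W, (AnalyticAt ℂ P p ∧ ‖p.2‖ < r) ∧ ‖P p‖ ≤ C * ‖p.1‖ ∧
      ‖qResidual H P p‖ ≤ K * ‖p.1‖ ^ (k + 1) := by
    intro p hp
    have := hball p (by
      rw [← ball_prod_same]
      exact ⟨ball_subset_ball hε1 hp.1, ball_subset_ball hε1 hp.2⟩)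
    simpa using this
  have hsc : ∀ p ∈ W, (p.2 * p.1, p.2) ∈ W ∧ ‖p.2 * p.1‖ ≤ r * ‖p.1‖ := by
    intro p hp
    have h1 : ‖p.2 * p.1‖ ≤ r * ‖p.1‖ :=
      (norm_mul_le _ _).trans (by gcongr; exact (hW p hp).1.2.le)
    refine ⟨⟨?_, hp.2⟩, h1⟩
    have h2 : ‖p.1‖ < ε := by simpa using hp.1
    rw [mem_ball_zero_iff]
    exact (h1.trans (mul_le_of_le_one_left (norm_nonneg _) hr2.le)).trans_lt h2
  let Y := correct H A P
  have hYs : ∀ j p, Y (j + 1) p = Y j p + A (qResidual H (Y j) p) := fun j p => rfl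
  have hsmall : ∀ p ∈ W, ∀ v : F, ‖v - P p‖ ≤ 2 * a * ‖p.1‖ ^ (k + 1) → ‖v‖ < ρ := by
    intro p hp v hv
    have h2 : ‖p.1‖ < ε := by simpa using hp.1
    have h3 : ‖p.1‖ ^ (k + 1) ≤ ‖p.1‖ := by
      simpa using pow_le_pow_of_le_one (norm_nonneg p.1) (h2.le.trans hε2) (Nat.le_add_left 1 k)
    have h4 : ‖v‖ ≤ (C + 2 * a) * ‖p.1‖ := by
      calc ‖v‖ = ‖(v - P p) + P p‖ := by rw [sub_add_cancel]
        _ ≤ 2 * a * ‖p.1‖ ^ (k + 1) + C * ‖p.1‖ :=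
          (norm_add_le _ _).trans (add_le_add hv (hW p hp).2.1)
        _ ≤ 2 * a * ‖p.1‖ + C * ‖p.1‖ := by gcongr
        _ = _ := by ring
    calc ‖v‖ ≤ (C + 2 * a) * ε := h4.trans (by gcongr)
      _ < (C + 2 * a + 1) * ε := mul_lt_mul_of_pos_right (lt_add_one _) hε
      _ ≤ ρ := by rwa [le_div_iff₀' hden] at hε4
  have hstep : ∀ j, ∀ p ∈ W, ‖Y j p - P p‖ ≤ 2 * a * (1 - (1 / 2) ^ j) * ‖p.1‖ ^ (k + 1) ∧
      ‖Y (j + 1) p - Y j p‖ ≤ a * (1 / 2) ^ j * ‖p.1‖ ^ (k + 1) := by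
    have hle : ∀ (j : ℕ) (x : ℝ), 0 ≤ x → 2 * a * (1 - (1 / 2) ^ j) * x ≤ 2 * a * x := by
      intro j x hx
      have : (0 : ℝ) ≤ (1 / 2) ^ j := by positivity
      have h7 : 2 * a * (1 - (1 / 2) ^ j) ≤ 2 * a := by nlinarith
      gcongr
    intro j
    induction j with
    | zero =>
      intro p hp
      constructor
      · simp [Y, correct]
      · rw [hYs, add_sub_cancel_left]
        refine (A.le_opNorm _).trans ?_
        calc ‖A‖ * ‖qResidual H P p‖ ≤ ‖A‖ * (K * ‖p.1‖ ^ (k + 1)) := by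
              gcongr; exact (hW p hp).2.2
          _ = _ := by simp only [a]; ring
    | succ j ih =>
      have hfirst : ∀ p ∈ W,
          ‖Y (j + 1) p - P p‖ ≤ 2 * a * (1 - (1 / 2) ^ (j + 1)) * ‖p.1‖ ^ (k + 1) := by
        intro p hp
        obtain ⟨h1, h2⟩ := ih p hp
        calc ‖Y (j + 1) p - P p‖ = ‖(Y (j + 1) p - Y j p) + (Y j p - P p)‖ := by
              rw [sub_add_sub_cancel]
          _ ≤ _ := norm_add_le _ _
          _ ≤ _ := add_le_add h2 h1
          _ = _ := by ring
      intro p hp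
      refine ⟨hfirst p hp, ?_⟩
      have hs1 := hsmall p hp _ ((ih p hp).1.trans (hle _ _ (by positivity)))
      have hs2 := hsmall p hp _ ((hfirst p hp).trans (hle _ _ (by positivity)))
      have ht : ‖p.1‖ < ρ := lt_of_lt_of_le (by simpa using hp.1) hε3
      have hq : ‖p.2 - q₀‖ < ρ := lt_of_lt_of_le (by simpa [dist_eq_norm] using hp.2) hε3
      have h1 := (hcon p.1 p.2 _ _ ht hq hs1 hs2).2
      have h2 := (ih _ (hsc p hp).1).2
      have h3 : Y (j + 1 + 1) p - Y (j + 1) p =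
          (Y (j + 1) p - Y j p - A (H (p.1, Y (j + 1) p, p.2) - H (p.1, Y j p, p.2))) +
          A (Y (j + 1) (p.2 * p.1, p.2) - Y j (p.2 * p.1, p.2)) := by
        rw [hYs (j + 1) p]
        conv_rhs => rw [hYs j p]
        simp only [qResidual, map_sub]
        rw [hYs j p]
        simp only [qResidual, map_sub]
        abel
      -- the first summand is contracted, and the second is small since `q * t` is shorter than `t`
      rw [h3]
      calc _ ≤ _ := norm_add_le _ _
        _ ≤ 1 / 4 * (a * (1 / 2) ^ j * ‖p.1‖ ^ (k + 1)) +
            ‖A‖ * (a * (1 / 2) ^ j * (r * ‖p.1‖) ^ (k + 1)) := by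
          refine add_le_add (h1.trans ?_) ((A.le_opNorm _).trans ?_)
          · gcongr; exact (ih p hp).2
          · gcongr
            refine h2.trans ?_
            have := (hsc p hp).2
            gcongr
        _ = (1 / 4 + ‖A‖ * r ^ (k + 1)) * (a * (1 / 2) ^ j * ‖p.1‖ ^ (k + 1)) := by ring
        _ ≤ (1 / 4 + 1 / 4) * (a * (1 / 2) ^ j * ‖p.1‖ ^ (k + 1)) := by gcongr
        _ = _ := by ring
  have hbd : ∀ j, ∀ p ∈ W, ‖Y j p - P p‖ ≤ 2 * a * ‖p.1‖ ^ (k + 1) := by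
    intro j p hp
    refine (hstep j p hp).1.trans ?_
    have : (0 : ℝ) ≤ (1 / 2) ^ j := by positivity
    have h7 : 2 * a * (1 - (1 / 2) ^ j) ≤ 2 * a := by nlinarith
    gcongr
  have hYa : ∀ j, ∀ p ∈ W, AnalyticAt ℂ (Y j) p := by
    intro j
    induction j with
    | zero => exact fun p hp => (hW p hp).1.1
    | succ j ih =>
      intro p hp
      have hs := hsmall p hp _ (hbd j p hp)
      have ht : ‖p.1‖ < ρ := lt_of_lt_of_le (by simpa using hp.1) hε3
      have hq : ‖p.2 - q₀‖ < ρ := lt_of_lt_of_le (by simpa [dist_eq_norm] using hp.2) hε3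
      have h1 : AnalyticAt ℂ (qResidual H (Y j)) p :=
        analyticAt_qResidual (ih p hp) (ih _ (hsc p hp).1) (hcon p.1 p.2 _ _ ht hq hs hs).1
      exact (ih p hp).add (AnalyticAt.fun_comp (A.analyticAt _) h1)
  have hdist : ∀ p ∈ W, ∀ j, dist (Y j p) (Y (j + 1) p) ≤ a * (1 / 2) ^ j := by
    intro p hp j
    rw [dist_comm, dist_eq_norm]
    refine (hstep j p hp).2.trans (mul_le_of_le_one_right (by positivity) ?_)
    have h2 : ‖p.1‖ < ε := by simpa using hp.1
    exact pow_le_one₀ (norm_nonneg _) (h2.le.trans hε2)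
  let y : (Fin m → ℂ) × (Fin m → ℂ) → F := fun p => limUnder atTop fun j => Y j p
  have hy : ∀ p ∈ W, Tendsto (fun j => Y j p) atTop (𝓝 (y p)) := fun p hp =>
    CauchySeq.tendsto_limUnder
      (cauchySeq_of_le_geometric (1 / 2) a (by norm_num) (hdist p hp))
  have hunif : TendstoUniformlyOn Y y atTop W := by
    rw [Metric.tendstoUniformlyOn_iff]
    intro η hη
    have h1 : Tendsto (fun j : ℕ => a * (1 / 2 : ℝ) ^ j / (1 - 1 / 2)) atTop
        (𝓝 (a * 0 / (1 - 1 / 2))) :=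
      ((tendsto_pow_atTop_nhds_zero_of_lt_one (by norm_num) (by norm_num)).const_mul _).div_const _
    rw [mul_zero, zero_div] at h1
    filter_upwards [h1.eventually_lt_const hη] with j hj p hp
    rw [dist_comm]
    exact (dist_le_of_le_geometric_of_tendsto (1 / 2) a (by norm_num) (hdist p hp) (hy p hp)
      j).trans_lt hj
  have hybd : ∀ p ∈ W, ‖y p - P p‖ ≤ 2 * a * ‖p.1‖ ^ (k + 1) := fun p hp =>
    le_of_tendsto ((hy p hp).sub_const _).norm (Eventually.of_forall fun j => hbd j p hp)
  refine ⟨y, fun t ht q hq => ⟨analyticAt_of_tendstoUniformlyOn hWo hYa hunif ⟨ht, hq⟩, ?_, ?_⟩⟩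
  · have hmem : ((0 : Fin m → ℂ), q) ∈ W := ⟨mem_ball_self hε, hq⟩
    have h1 := hybd _ hmem
    have h2 := (hW _ hmem).2.1
    simp only [norm_zero, mul_zero, ne_eq, Nat.succ_ne_zero, not_false_eq_true, zero_pow,
      norm_le_zero_iff] at h1 h2
    rwa [h2, sub_zero] at h1
  · have hp : (t, q) ∈ W := ⟨ht, hq⟩
    have hs := hsmall _ hp _ (hybd _ hp)
    have ht' : ‖t‖ < ρ := lt_of_lt_of_le (by simpa using ht) hε3
    have hq' : ‖q - q₀‖ < ρ := lt_of_lt_of_le (by simpa [dist_eq_norm] using hq) hε3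
    have hHc : ContinuousAt H (t, y (t, q), q) := (hcon t q _ _ ht' hq' hs hs).1.continuousAt
    have h1 : Tendsto (fun j => H (t, Y j (t, q), q)) atTop (𝓝 (H (t, y (t, q), q))) :=
      hHc.tendsto.comp (tendsto_const_nhds.prodMk_nhds ((hy _ hp).prodMk_nhds tendsto_const_nhds))
    have h2 : Tendsto (fun j => Y j (t, q) + A (qResidual H (Y j) (t, q))) atTop
        (𝓝 (y (t, q) + A (y (q * t, q) - H (t, y (t, q), q)))) :=
      (hy _ hp).add ((A.continuous.tendsto _).comp ((hy _ (hsc _ hp).1).sub h1))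
    have h3 : Tendsto (fun j => Y (j + 1) (t, q)) atTop (𝓝 (y (t, q))) :=
      (hy _ hp).comp (tendsto_add_atTop_nat 1)
    -- the limit is a fixed point of the correction step, and `A` is injective
    have h4 := tendsto_nhds_unique h3 h2
    exact sub_eq_zero.1 (hA' _ (by simpa using h4))

end

/-! ### The Jacobian matrix and its spectrum -/

theorem isUnit_smul_one_sub_of_notMem_spectrum {n : ℕ} {M : Matrix (Fin n) (Fin n) ℂ} {c : ℂ}
    (h : c ∉ spectrum ℂ M) :
    IsUnit (c • (1 : (Fin n → ℂ) →L[ℂ] (Fin n → ℂ)) -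
      LinearMap.toContinuousLinearMap (Matrix.toLin' M)) := by
  have h1 : IsUnit (algebraMap ℂ (Matrix (Fin n) (Fin n) ℂ) c - M) := spectrum.notMem_iff.1 h
  obtain ⟨N, hN1, hN2⟩ := isUnit_iff_exists.1 h1
  rw [isUnit_iff_exists]
  have key : c • (1 : (Fin n → ℂ) →L[ℂ] (Fin n → ℂ)) -
      LinearMap.toContinuousLinearMap (Matrix.toLin' M) =
      LinearMap.toContinuousLinearMap
        (Matrix.toLin' (algebraMap ℂ (Matrix (Fin n) (Fin n) ℂ) c - M)) := by
    ext v i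
    simp [Algebra.algebraMap_eq_smul_one]
  refine ⟨LinearMap.toContinuousLinearMap (Matrix.toLin' N), ?_, ?_⟩
  · rw [key]
    ext1 v
    simp only [mul_apply_eq_comp, LinearMap.coe_toContinuousLinearMap',
      Matrix.toLin'_apply, Matrix.mulVec_mulVec, hN1, Matrix.one_mulVec,
      one_apply_eq_self]
  · rw [key]
    ext1 v
    simp only [mul_apply_eq_comp, LinearMap.coe_toContinuousLinearMap',
      Matrix.toLin'_apply, Matrix.mulVec_mulVec, hN2, Matrix.one_mulVec,
      one_apply_eq_self]

theorem linearPart_eq_toLin' {m n : ℕ} {H : (Fin m → ℂ) × (Fin n → ℂ) × (Fin m → ℂ) → Fin n → ℂ}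
    {q : Fin m → ℂ} {M : Matrix (Fin n) (Fin n) ℂ} (hH : DifferentiableAt ℂ H (0, 0, q))
    (hM : ∀ j k, HasDerivAt
      (fun z : ℂ => H (0, Function.update (0 : Fin n → ℂ) k z, q) j) (M j k) 0) :
    linearPart H q = LinearMap.toContinuousLinearMap (Matrix.toLin' M) := by
  have key : ∀ j k, linearPart H q (Pi.single k 1) j = M j k := by
    intro j k
    let f : ℂ → (Fin m → ℂ) × (Fin n → ℂ) × (Fin m → ℂ) := fun z => (0, z • Pi.single k 1, q)
    have hf : HasDerivAt f (0, Pi.single k 1, 0) 0 := by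
      refine (hasDerivAt_const _ _).prodMk (HasDerivAt.prodMk ?_ (hasDerivAt_const _ _))
      simpa using (hasDerivAt_id (0 : ℂ)).smul_const (Pi.single k 1 : Fin n → ℂ)
    have hf0 : f 0 = (0, 0, q) := by simp [f]
    have h1 := (hf0 ▸ hH.hasFDerivAt : HasFDerivAt H (fderiv ℂ H (0, 0, q)) (f 0)).comp_hasDerivAt
      0 hf
    have h2 := hasDerivAt_pi.1 h1 j
    have h3 : (fun z : ℂ => H (0, Function.update (0 : Fin n → ℂ) k z, q) j) =
        fun z => (H ∘ f) z j := by
      funext z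
      have : Function.update (0 : Fin n → ℂ) k z = z • Pi.single k 1 := by
        rw [← Pi.single_smul, smul_eq_mul, mul_one]
        rfl
      simp only [Function.comp, f, this]
    have h4 := hM j k
    rw [h3] at h4
    exact h2.unique h4
  have : (linearPart H q : (Fin n → ℂ) →ₗ[ℂ] (Fin n → ℂ)) = Matrix.toLin' M := by
    refine LinearMap.pi_ext' fun k => LinearMap.ext_ring ?_
    funext j
    simpa using key j k
  rw [← this]
  rfl

theorem stmt3 (m n : ℕ) (hm : 1 ≤ m) (hn : 1 ≤ n)
    (U : Set (Fin m → ℂ)) (hUopen : IsOpen U)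
    (hUsub : U ⊆ {q : Fin m → ℂ | ∀ i, ‖q i‖ < 1})
    (H : (Fin m → ℂ) → (Fin n → ℂ) → (Fin m → ℂ) → (Fin n → ℂ))
    (hH : ∀ q0 ∈ U, AnalyticAt ℂ
      (fun p : (Fin m → ℂ) × (Fin n → ℂ) × (Fin m → ℂ) => H p.1 p.2.1 p.2.2) (0, 0, q0))
    (hH0 : ∀ q ∈ U, H 0 0 q = 0)
    (D : (Fin m → ℂ) → Matrix (Fin n) (Fin n) ℂ)
    (hD : ∀ q ∈ U, ∀ j k, HasDerivAt
      (fun z : ℂ => H 0 (Function.update (0 : Fin n → ℂ) k z) q j) (D q j k) 0)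
    (hspec : ∀ q ∈ U, ∀ μ ∈ spectrum ℂ (D q),
      μ ∉ ({0} ∪ {x : ℂ | ∃ α : Fin m → ℕ, α ≠ 0 ∧ ∏ i, q i ^ α i = x} : Set ℂ)) :
    ∀ q0 ∈ U, ∃ (Z V : Set (Fin m → ℂ)),
      IsOpen Z ∧ (0 : Fin m → ℂ) ∈ Z ∧ IsOpen V ∧ q0 ∈ V ∧ V ⊆ U ∧
      ∃ y : (Fin m → ℂ) → (Fin m → ℂ) → Fin n → ℂ,
        (∀ t ∈ Z, ∀ q ∈ V,
          AnalyticAt ℂ (fun p : (Fin m → ℂ) × (Fin m → ℂ) => y p.1 p.2) (t, q)) ∧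
        (∀ q ∈ V, y 0 q = 0) ∧
        (∀ q ∈ V, ∀ t ∈ Z, (fun i => q i * t i) ∈ Z →
          y (fun i => q i * t i) q = H t (y t q) q) := by
  intro q0 hq0
  let F : (Fin m → ℂ) × (Fin n → ℂ) × (Fin m → ℂ) → Fin n → ℂ := fun p => H p.1 p.2.1 p.2.2
  have hF : AnalyticAt ℂ F (0, 0, q0) := hH q0 hq0
  have hnorm : ‖q0‖ < 1 := (pi_norm_lt_iff one_pos).2 (hUsub hq0)
  have hlin : linearPart F q0 = LinearMap.toContinuousLinearMap (Matrix.toLin' (D q0)) :=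
    linearPart_eq_toLin' hF.differentiableAt (hD q0 hq0)
  have hF0 : ∀ᶠ q in nhds q0, F (0, 0, q) = 0 :=
    Filter.mem_of_superset (hUopen.mem_nhds hq0) fun q hq => hH0 q hq
  have hunit0 : IsUnit (linearPart F q0) := by
    have h0 : (0 : ℂ) ∉ spectrum ℂ (D q0) := fun h => hspec q0 hq0 0 h (Or.inl rfl)
    have h1 := isUnit_smul_one_sub_of_notMem_spectrum h0
    have h2 : (0 : ℂ) • (1 : (Fin n → ℂ) →L[ℂ] (Fin n → ℂ)) - linearPart F q0 =
        -linearPart F q0 := by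
      ext
      simp
    rw [← hlin, h2] at h1
    exact (IsUnit.neg_iff _).1 h1
  have hunit : ∀ α : Fin m → ℕ, α ≠ 0 → IsUnit
      ((∏ i, q0 i ^ α i) • (1 : (Fin n → ℂ) →L[ℂ] (Fin n → ℂ)) - linearPart F q0) := by
    intro α hα
    rw [hlin]
    exact isUnit_smul_one_sub_of_notMem_spectrum
      fun h => hspec q0 hq0 _ h (Or.inr ⟨α, hα, rfl⟩)
  obtain ⟨δ, hδ, hsol⟩ := exists_solution hnorm hF hF0 hunit0 hunit
  obtain ⟨ρ, hρ, hρU⟩ := Metric.isOpen_iff.1 hUopen q0 hq0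
  obtain ⟨y, hy⟩ := hsol (min δ ρ) (lt_min hδ hρ) (min_le_left _ _)
  have hpos : 0 < min δ ρ := lt_min hδ hρ
  refine ⟨Metric.ball 0 (min δ ρ), Metric.ball q0 (min δ ρ), Metric.isOpen_ball,
    Metric.mem_ball_self hpos, Metric.isOpen_ball, Metric.mem_ball_self hpos,
    (Metric.ball_subset_ball (min_le_right _ _)).trans hρU, fun t q => y (t, q),
    fun t ht q hq => (hy t ht q hq).1, fun q hq => (hy 0 (Metric.mem_ball_self hpos) q hq).2.1,
    fun q hq t ht _ => (hy t ht q hq).2.2⟩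
end
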